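/- arXiv:0805.1996 — 4 statements merged into one kernel-verified Lean document; each statement's English description precedes it below -/
import Mathlib

section
/- Let 0 < α ≤ ∞ and let f be a real polynomial of degree at most 5 with f(0) ≤ 0. If f is matrix convex of order 2 on [0,α), then the function g(t) = f(t)/t is matrix monotone of order 2 on (0,α). -/
/-!
Write `f = ∑ aₖ tᵏ` and `q(t) = (f(t) - f(0))/t`, so that `g(t) = q(t) + f(0)/t`, and write `hₖ`
for the derivative of order `k` of `h` divided by `k!`. As `f(0) ≤ 0` and inversion is
operator antitone (`inv_anti`), it is enough that the polynomial `q`, of degree at most four, is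
2-monotone on `(0, α)`.

* Testing 2-convexity of `f` on suitable pairs of matrices near `t • 1` and passing to the limit
  shows that the Hankel matrix `M(t) = (f₂ f₃; f₃ f₄)` is positive semidefinite on `(0, α)`
  (`convForm_nonneg`).
* The Hankel matrix `N(t) = (q₁ q₂; q₂ q₃)` satisfies
  `N(t) = ½ CᵀM(t)C + ½ CᵀM(3t/5)C + (4t²/25) f₄(3t/5) E₁₁`, where `C = (1 0; -t/5 1)`
  (`monoForm_eq`). This is where the degree bound on `f` is essential; hence `N(t) ≥ 0`.
* The Loewner matrix of `q` at two nodes is a positive combination of matrices `CᵀNC`, with `N`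
  taken at these nodes (`loewner_eq`), hence positive semidefinite. By the Schur product theorem
  the derivative of `s ↦ q(A + sH)` is positive semidefinite for `H ≥ 0` (`matDeriv_posSemidef`),
  and so `q` is monotone along the segment from `A` to `B` (`matPoly_mono`).
-/

open Matrix Set MeasureTheory
open scoped ComplexOrder

/-- `f` is matrix monotone of order `n` on the set `I ⊆ ℝ`: for all `n × n` Hermitian complex
matrices `A, B` with spectra contained in `I`, `A ≤ B` in the Loewner order (i.e. `B - A` is
positive semidefinite) implies `f(A) ≤ f(B)`, where `f(A)` is given by the continuous functional
calculus (applying `f` to the eigenvalues in a spectral decomposition). -/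
def MatrixMonotoneOn (n : ℕ) (f : ℝ → ℝ) (I : Set ℝ) : Prop :=
  ∀ A B : Matrix (Fin n) (Fin n) ℂ, A.IsHermitian → B.IsHermitian →
    spectrum ℝ A ⊆ I → spectrum ℝ B ⊆ I → (B - A).PosSemidef →
    (cfc f B - cfc f A).PosSemidef

/-- `f` is matrix convex of order `n` on the set `I ⊆ ℝ`: for all `n × n` Hermitian complex
matrices `A, B` with spectra contained in `I` and all `l ∈ [0,1]`,
`f(l•A + (1-l)•B) ≤ l•f(A) + (1-l)•f(B)` in the Loewner order. -/
def MatrixConvexOn (n : ℕ) (f : ℝ → ℝ) (I : Set ℝ) : Prop :=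
  ∀ A B : Matrix (Fin n) (Fin n) ℂ, A.IsHermitian → B.IsHermitian →
    spectrum ℝ A ⊆ I → spectrum ℝ B ⊆ I → ∀ l : ℝ, 0 ≤ l → l ≤ 1 →
    (l • cfc f A + (1 - l) • cfc f B - cfc f (l • A + (1 - l) • B)).PosSemidef

/-! ### Quadratic forms and the two certificates -/

/-- The quadratic form of the Hankel matrix `(f₂ f₃; f₃ f₄)` at `t`, for `f = ∑ aₖ tᵏ` of degree at
most five, evaluated at the vector `(X, Y)`. Here `fₖ` is the `k`-th derivative divided by `k!`. -/
def convForm (a : ℕ → ℝ) (t X Y : ℝ) : ℝ :=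
  (a 2 + 3 * a 3 * t + 6 * a 4 * t ^ 2 + 10 * a 5 * t ^ 3) * X ^ 2
    + 2 * (a 3 + 4 * a 4 * t + 10 * a 5 * t ^ 2) * X * Y + (a 4 + 5 * a 5 * t) * Y ^ 2

/-- The quadratic form of the Hankel matrix `(q₁ q₂; q₂ q₃)` at `t`, for `q = ∑ aₖ₊₁ tᵏ` of degree
at most four, evaluated at the vector `(X, Y)`. Here `qₖ` is the `k`-th derivative divided by
`k!`. -/
def monoForm (a : ℕ → ℝ) (t X Y : ℝ) : ℝ :=
  (a 2 + 2 * a 3 * t + 3 * a 4 * t ^ 2 + 4 * a 5 * t ^ 3) * X ^ 2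
    + 2 * (a 3 + 3 * a 4 * t + 6 * a 5 * t ^ 2) * X * Y + (a 4 + 4 * a 5 * t) * Y ^ 2

/-- The form for `q = (f - f(0))/t` at `t` is a positive combination of forms for `f` at `t` and
`3t/5`. The nodes and weights come from matching the coefficients of `f = tᵏ`, `k = 2, …, 5`. -/
lemma monoForm_eq (a : ℕ → ℝ) (t X Y : ℝ) :
    monoForm a t X Y = 1 / 2 * convForm a t X (Y - t * X / 5)
      + 1 / 2 * convForm a (3 / 5 * t) X (Y - t * X / 5)
      + 4 / 25 * convForm a (3 / 5 * t) 0 (t * X) := by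
  unfold monoForm convForm; ring

/-- First divided difference `q[s, t]` of `q = ∑ aₖ₊₁ tᵏ` (degree at most four); it is the
derivative of `q` at `s` when `s = t`. -/
def divDiff (a : ℕ → ℝ) (s t : ℝ) : ℝ :=
  a 2 + a 3 * (s + t) + a 4 * (s ^ 2 + s * t + t ^ 2) + a 5 * (s ^ 3 + s ^ 2 * t + s * t ^ 2 + t ^ 3)

/-- The quadratic form of the Loewner matrix of `q` at the nodes `s, t` is a positive combination
of the Hankel forms of `q` at these two nodes. -/
lemma loewner_eq (a : ℕ → ℝ) (s t x y : ℝ) :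
    divDiff a s s * x ^ 2 + 2 * divDiff a s t * x * y + divDiff a t t * y ^ 2
    = 1 / 2 * (monoForm a t (x + y) (-((t - s) * x)) + monoForm a t 0 ((t - s) * (x + y)))
      + 1 / 2 * (monoForm a s (x + y) ((t - s) * y) + monoForm a s 0 ((t - s) * (x + y))) := by
  unfold monoForm divDiff; ring

/-- The value `wᵀ (∑ cₖ Zᵏ) w`, `k ≤ 5`, for the real symmetric matrix `Z = (x y; y z)` and
`w = (u, v)`. It is written through `Z w` and `Z² w`, e.g. `wᵀ Z⁵ w = (Z² w)ᵀ Z (Z² w)`. -/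
def quad (c : ℕ → ℝ) (x y z u v : ℝ) : ℝ :=
  c 0 * (u * u + v * v) + c 1 * (u * (x * u + y * v) + v * (y * u + z * v))
  + c 2 * ((x * u + y * v) ^ 2 + (y * u + z * v) ^ 2)
  + c 3 * (x * (x * u + y * v) ^ 2 + 2 * y * (x * u + y * v) * (y * u + z * v)
      + z * (y * u + z * v) ^ 2)
  + c 4 * ((x * (x * u + y * v) + y * (y * u + z * v)) ^ 2
      + (y * (x * u + y * v) + z * (y * u + z * v)) ^ 2)
  + c 5 * (x * (x * (x * u + y * v) + y * (y * u + z * v)) ^ 2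
      + 2 * y * (x * (x * u + y * v) + y * (y * u + z * v))
        * (y * (x * u + y * v) + z * (y * u + z * v))
      + z * (y * (x * u + y * v) + z * (y * u + z * v)) ^ 2)

/-- Half the second difference of `quad` at `diag(0, h)` in the direction
`d (hX - Y, h²; h², 0)`, tested on `(h², Y)`. Its leading term for `d → 0` and then `h → 0` is
`d² h⁶ (c₂X² + 2c₃XY + c₄Y²)`. -/
lemma quad_second_diff (c : ℕ → ℝ) (h X Y d : ℝ) :
    1 / 2 * quad c (d * (h * X - Y)) (d * h ^ 2) h (h ^ 2) Y
      + 1 / 2 * quad c (-(d * (h * X - Y))) (-(d * h ^ 2)) h (h ^ 2) Y - quad c 0 0 h (h ^ 2) Y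
    = d ^ 2 * (h ^ 6 * (c 2 * (X ^ 2 + h ^ 2) + c 3 * (2 * X * Y + h ^ 3)
        + c 4 * (Y ^ 2 + 2 * h * X * Y + h ^ 4)
        + c 5 * (h ^ 5 + 2 * h ^ 2 * X * Y + 2 * h * Y ^ 2))
      + d ^ 2 * (c 4 * (((h * X - Y) * h ^ 3 * X + h ^ 6) ^ 2 + h ^ 10 * X ^ 2)
        + c 5 * (2 * h ^ 3 * Y * ((h * X - Y) ^ 2 * h ^ 3 * X + (h * X - Y) * h ^ 6 + h ^ 7 * X)
          + 2 * h ^ 10 * ((h * X - Y) * X + h ^ 3) + h ^ 11 * X ^ 2))) := by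
  unfold quad; ring

/-! ### Convexity of order two implies nonnegativity of the Hankel form of `f` -/

/-- The real symmetric matrix `(x y; y z)`, regarded as a complex Hermitian matrix. -/
def symMat (x y z : ℝ) : Matrix (Fin 2) (Fin 2) ℂ := !![(x : ℂ), (y : ℂ); (y : ℂ), (z : ℂ)]

lemma symMat_isHermitian (x y z : ℝ) : (symMat x y z).IsHermitian := by
  ext i j
  fin_cases i <;> fin_cases j <;> simp [symMat]

/-- If the symmetric matrix `(x y; y z)` has entries below `r / 2` in absolute value, then adding
`t` to its diagonal gives a matrix whose spectrum lies within `r` of `t`. -/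
lemma symMat_spectrum {t x y z r : ℝ} (hx : |x| < r / 2) (hy : |y| < r / 2) (hz : |z| < r / 2)
    {l : ℝ} (hl : l ∈ spectrum ℝ (symMat (t + x) y (t + z))) : |l - t| < r := by
  rw [spectrum.mem_iff, Matrix.isUnit_iff_isUnit_det, isUnit_iff_ne_zero, not_not] at hl
  have h : (l - t - x) * (l - t - z) - y * y = 0 := by
    have h2 : (((l - t - x) * (l - t - z) - y * y : ℝ) : ℂ) = 0 := by
      rw [← hl]
      simp [symMat, Matrix.det_fin_two, Algebra.algebraMap_eq_smul_one]
      ring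
    exact_mod_cast h2
  by_contra! hc
  rw [abs_lt] at hx hy hz
  rcases le_abs.1 hc with h1 | h1 <;> nlinarith

lemma quad_eq (c : ℕ → ℝ) (x y z u v : ℝ) :
    star ![(u : ℂ), (v : ℂ)] ⬝ᵥ
        ((∑ k ∈ Finset.range 6, c k • symMat x y z ^ k) *ᵥ ![(u : ℂ), (v : ℂ)])
      = (quad c x y z u v : ℂ) := by
  simp [Finset.sum_range_succ, symMat, pow_succ, quad, dotProduct, mulVec,
    Fin.sum_univ_two]
  ring

/-- Taylor coefficients at `t` of the polynomial `∑ aₖ Xᵏ`, `k ≤ 5`. -/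
def shiftCoeff (a : ℕ → ℝ) (t : ℝ) : ℕ → ℝ
  | 0 => a 0 + a 1 * t + a 2 * t ^ 2 + a 3 * t ^ 3 + a 4 * t ^ 4 + a 5 * t ^ 5
  | 1 => a 1 + 2 * a 2 * t + 3 * a 3 * t ^ 2 + 4 * a 4 * t ^ 3 + 5 * a 5 * t ^ 4
  | 2 => a 2 + 3 * a 3 * t + 6 * a 4 * t ^ 2 + 10 * a 5 * t ^ 3
  | 3 => a 3 + 4 * a 4 * t + 10 * a 5 * t ^ 2
  | 4 => a 4 + 5 * a 5 * t
  | 5 => a 5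
  | _ => 0

lemma poly_shift (p : Polynomial ℝ) (hdeg : p.natDegree ≤ 5) (t : ℝ) :
    p = ∑ k ∈ Finset.range 6,
      Polynomial.C (shiftCoeff p.coeff t k) * (Polynomial.X - Polynomial.C t) ^ k := by
  conv_lhs => rw [p.as_sum_range' 6 (by omega)]
  simp only [Finset.sum_range_succ, Finset.sum_range_zero, shiftCoeff,
    ← Polynomial.C_mul_X_pow_eq_monomial, map_add, map_mul, map_pow, map_ofNat]
  ring

lemma cfc_symMat (p : Polynomial ℝ) (hdeg : p.natDegree ≤ 5) (t x y z : ℝ) :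
    cfc (fun s => p.eval s) (symMat (t + x) y (t + z))
      = ∑ k ∈ Finset.range 6, shiftCoeff p.coeff t k • symMat x y z ^ k := by
  have hh : symMat (t + x) y (t + z) - algebraMap ℝ _ t = symMat x y z := by
    ext i j
    fin_cases i <;> fin_cases j <;> simp [symMat, Algebra.algebraMap_eq_smul_one]
  rw [cfc_polynomial p _ (symMat_isHermitian _ _ _).isSelfAdjoint]
  conv_lhs => rw [poly_shift p hdeg t]
  simp only [map_sum, map_mul, map_pow, map_sub, Polynomial.aeval_C, Polynomial.aeval_X,
    Algebra.algebraMap_eq_smul_one, smul_mul_assoc, one_mul]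
  rw [← Algebra.algebraMap_eq_smul_one, hh]

/-- If the polynomial is 2-convex on a neighbourhood of `t`, its Hankel form at `t` is nonnegative:
midpoint convexity is applied to the pair of matrices in `quad_second_diff`, translated by `t`. -/
lemma convForm_nonneg (p : Polynomial ℝ) (hdeg : p.natDegree ≤ 5) (I : Set ℝ)
    (hconv : MatrixConvexOn 2 (fun t => p.eval t) I) (t r : ℝ) (hr : 0 < r)
    (hI : ∀ l, |l - t| < r → l ∈ I) (X Y : ℝ) : 0 ≤ convForm p.coeff t X Y := by
  set c := shiftCoeff p.coeff t with hc
  have step1 : ∀ x y h u v : ℝ, |x| < r / 2 → |y| < r / 2 → |h| < r / 2 →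
      0 ≤ 1 / 2 * quad c x y h u v + 1 / 2 * quad c (-x) (-y) h u v - quad c 0 0 h u v := by
    intro x y h u v hx hy hh
    have := hconv (symMat (t + x) y (t + h)) (symMat (t + -x) (-y) (t + h))
      (symMat_isHermitian _ _ _) (symMat_isHermitian _ _ _)
      (fun l hl => hI l (symMat_spectrum hx hy hh hl))
      (fun l hl => hI l (symMat_spectrum (by simpa using hx) (by simpa using hy) hh hl))
      (1 / 2) (by norm_num) (by norm_num)
    have hmid : (1 / 2 : ℝ) • symMat (t + x) y (t + h)
        + (1 - 1 / 2 : ℝ) • symMat (t + -x) (-y) (t + h) = symMat (t + 0) 0 (t + h) := by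
      ext i j
      fin_cases i <;> fin_cases j <;> simp [symMat] <;> ring
    rw [hmid] at this
    simp only [cfc_symMat p hdeg] at this
    have h2 := this.dotProduct_mulVec_nonneg ![(u : ℂ), (v : ℂ)]
    rw [Matrix.sub_mulVec, Matrix.add_mulVec, Matrix.smul_mulVec, Matrix.smul_mulVec,
      dotProduct_sub, dotProduct_add, dotProduct_smul, dotProduct_smul, quad_eq, quad_eq,
      quad_eq] at h2
    have h3 : (0 : ℂ) ≤ ((1 / 2 * quad c x y h u v + 1 / 2 * quad c (-x) (-y) h u v
        - quad c 0 0 h u v : ℝ) : ℂ) := by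
      convert h2 using 1
      push_cast
      simp [hc]
      norm_num
    exact_mod_cast h3
  -- The limit `d → 0`.
  have step2 : ∀ h : ℝ, 0 < h → h < r / 2 → 0 ≤ (c 2 * (X ^ 2 + h ^ 2)
        + c 3 * (2 * X * Y + h ^ 3) + c 4 * (Y ^ 2 + 2 * h * X * Y + h ^ 4)
        + c 5 * (h ^ 5 + 2 * h ^ 2 * X * Y + 2 * h * Y ^ 2)) := by
    intro h h0 hr2
    refine nonneg_of_mul_nonneg_right (a := h ^ 6) ?_ (by positivity)
    refine ge_of_tendsto (x := nhdsWithin (0 : ℝ) (Ioi 0)) (f := fun d =>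
      (h ^ 6 * (c 2 * (X ^ 2 + h ^ 2) + c 3 * (2 * X * Y + h ^ 3)
        + c 4 * (Y ^ 2 + 2 * h * X * Y + h ^ 4)
        + c 5 * (h ^ 5 + 2 * h ^ 2 * X * Y + 2 * h * Y ^ 2))
      + d ^ 2 * (c 4 * (((h * X - Y) * h ^ 3 * X + h ^ 6) ^ 2 + h ^ 10 * X ^ 2)
        + c 5 * (2 * h ^ 3 * Y * ((h * X - Y) ^ 2 * h ^ 3 * X + (h * X - Y) * h ^ 6 + h ^ 7 * X)
          + 2 * h ^ 10 * ((h * X - Y) * X + h ^ 3) + h ^ 11 * X ^ 2)))) ?_ ?_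
    · refine Filter.Tendsto.mono_left (Continuous.tendsto' (by fun_prop) _ _ ?_)
        nhdsWithin_le_nhds
      ring
    · have e1 : ∀ᶠ d in nhdsWithin (0 : ℝ) (Ioi 0), |d * (h * X - Y)| < r / 2 :=
        nhdsWithin_le_nhds ((show Continuous fun d : ℝ => |d * (h * X - Y)| by fun_prop).tendsto 0
          |>.eventually_lt_const (by simpa using hr))
      have e2 : ∀ᶠ d in nhdsWithin (0 : ℝ) (Ioi 0), |d * h ^ 2| < r / 2 :=
        nhdsWithin_le_nhds ((show Continuous fun d : ℝ => |d * h ^ 2| by fun_prop).tendsto 0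
          |>.eventually_lt_const (by simpa using hr))
      filter_upwards [e1, e2, self_mem_nhdsWithin] with d h1 h2 h3
      have h3' : 0 < d := h3
      have := step1 _ _ h (h ^ 2) Y h1 h2 (by rwa [abs_of_pos h0])
      rw [quad_second_diff] at this
      exact nonneg_of_mul_nonneg_right this (by positivity)
  have : convForm p.coeff t X Y = c 2 * X ^ 2 + c 3 * (2 * X * Y) + c 4 * Y ^ 2 := by
    simp only [hc, shiftCoeff, convForm]; ring
  rw [this]
  -- The limit `h → 0`.
  refine ge_of_tendsto (x := nhdsWithin (0 : ℝ) (Ioi 0)) (f := fun h =>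
      (c 2 * (X ^ 2 + h ^ 2)
        + c 3 * (2 * X * Y + h ^ 3) + c 4 * (Y ^ 2 + 2 * h * X * Y + h ^ 4)
        + c 5 * (h ^ 5 + 2 * h ^ 2 * X * Y + 2 * h * Y ^ 2))) ?_ ?_
  · refine Filter.Tendsto.mono_left (Continuous.tendsto' (by fun_prop) _ _ ?_)
        nhdsWithin_le_nhds
    ring
  · filter_upwards [Ioo_mem_nhdsGT (show (0 : ℝ) < r / 2 by positivity)] with h hh
    exact step2 h hh.1 hh.2

/-! ### Monotonicity of the polynomial part -/

/-- The Fréchet derivative at `A` in direction `H` of `A ↦ ∑ aₖ₊₁ Aᵏ` (degree at most four). -/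
noncomputable def matDeriv (a : ℕ → ℝ) (A H : Matrix (Fin 2) (Fin 2) ℂ) :
    Matrix (Fin 2) (Fin 2) ℂ :=
  a 2 • H + a 3 • (H * A + A * H) + a 4 • (H * A * A + A * H * A + A * A * H)
    + a 5 • (H * A * A * A + A * H * A * A + A * A * H * A + A * A * A * H)

lemma loewner_posSemidef (a : ℕ → ℝ) (d : Fin 2 → ℝ)
    (h : ∀ x y : ℝ, 0 ≤ divDiff a (d 0) (d 0) * x ^ 2 + 2 * divDiff a (d 0) (d 1) * x * y
      + divDiff a (d 1) (d 1) * y ^ 2) :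
    (Matrix.of fun i j => (divDiff a (d i) (d j) : ℂ)).PosSemidef := by
  have hsym : divDiff a (d 1) (d 0) = divDiff a (d 0) (d 1) := by unfold divDiff; ring
  refine Matrix.PosSemidef.of_dotProduct_mulVec_nonneg ?_ fun v => ?_
  · ext i j
    fin_cases i <;> fin_cases j <;> simp [hsym]
  · have h1 := h (v 0).re (v 1).re
    have h2 := h (v 0).im (v 1).im
    rw [Complex.nonneg_iff]
    constructor
    · simp [dotProduct, mulVec, Fin.sum_univ_two, hsym]
      nlinarith
    · simp [dotProduct, mulVec, Fin.sum_univ_two, hsym]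
      ring

/-- At a diagonal matrix the derivative is the Hadamard product with the Loewner matrix. -/
lemma matDeriv_diagonal (a : ℕ → ℝ) (d : Fin 2 → ℝ) (H : Matrix (Fin 2) (Fin 2) ℂ) :
    matDeriv a (diagonal (RCLike.ofReal ∘ d)) H
      = (Matrix.of fun i j => (divDiff a (d i) (d j) : ℂ)) ⊙ H := by
  ext i j
  simp [matDeriv, divDiff, Matrix.mul_diagonal, Matrix.diagonal_mul]
  ring

lemma matDeriv_posSemidef (a : ℕ → ℝ) (I : Set ℝ)
    (hN : ∀ t ∈ I, ∀ X Y, 0 ≤ monoForm a t X Y) {A H : Matrix (Fin 2) (Fin 2) ℂ}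
    (hA : A.IsHermitian) (hAI : spectrum ℝ A ⊆ I) (hH : H.PosSemidef) :
    (matDeriv a A H).PosSemidef := by
  set φ := Unitary.conjStarAlgAut ℂ (Matrix (Fin 2) (Fin 2) ℂ) hA.eigenvectorUnitary with hφ
  have key : matDeriv a A H
      = φ (matDeriv a (diagonal (RCLike.ofReal ∘ hA.eigenvalues)) (φ.symm H)) := by
    conv_lhs => rw [hA.spectral_theorem, ← hφ]
    have hs : ∀ (r : ℝ) M, φ (r • M) = r • φ M := fun r M => by
      rw [← Complex.coe_smul, map_smul, Complex.coe_smul]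
    simp only [matDeriv, map_add, map_mul, hs, StarAlgEquiv.apply_symm_apply]
  have hH' : (φ.symm H).PosSemidef := by
    rw [hφ, Unitary.conjStarAlgAut_symm_apply]
    simpa [Matrix.star_eq_conjTranspose] using
      hH.conjTranspose_mul_mul_same (hA.eigenvectorUnitary : Matrix (Fin 2) (Fin 2) ℂ)
  rw [key, matDeriv_diagonal, hφ, Unitary.conjStarAlgAut_apply]
  refine Matrix.PosSemidef.mul_mul_conjTranspose_same (Matrix.PosSemidef.hadamard ?_ hH') _
  refine loewner_posSemidef a _ fun x y => ?_
  rw [loewner_eq]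
  have h0 := hN _ (hAI (hA.eigenvalues_mem_spectrum_real 0))
  have h1 := hN _ (hAI (hA.eigenvalues_mem_spectrum_real 1))
  have := h1 (x + y) (-((hA.eigenvalues 1 - hA.eigenvalues 0) * x))
  have := h1 0 ((hA.eigenvalues 1 - hA.eigenvalues 0) * (x + y))
  have := h0 (x + y) ((hA.eigenvalues 1 - hA.eigenvalues 0) * y)
  have := h0 0 ((hA.eigenvalues 1 - hA.eigenvalues 0) * (x + y))
  linarith

/-- The matrix polynomial `∑ aₖ₊₁ Aᵏ` of degree at most four. -/
noncomputable def matPoly (a : ℕ → ℝ) (A : Matrix (Fin 2) (Fin 2) ℂ) :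
    Matrix (Fin 2) (Fin 2) ℂ :=
  a 1 • 1 + a 2 • A + a 3 • (A * A) + a 4 • (A * A * A) + a 5 • (A * A * A * A)

section
open scoped Matrix.Norms.L2Operator MatrixOrder

lemma matPoly_hasDerivAt (a : ℕ → ℝ) (A H : Matrix (Fin 2) (Fin 2) ℂ) (s : ℝ) :
    HasDerivAt (fun s : ℝ => matPoly a (A + s • H)) (matDeriv a (A + s • H) H) s := by
  have h1 : HasDerivAt (fun s : ℝ => A + s • H) H s := by
    simpa using ((hasDerivAt_id s).smul_const H).const_add A
  have h2 := h1.fun_mul h1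
  have h3 := h2.fun_mul h1
  have h4 := h3.fun_mul h1
  have := ((((h1.fun_const_smul (a 2)).const_add (a 1 • 1)).fun_add
    (h2.fun_const_smul (a 3))).fun_add (h3.fun_const_smul (a 4))).fun_add (h4.fun_const_smul (a 5))
  refine this.congr_deriv ?_
  simp only [matDeriv, add_mul]

/-- Along the segment from `A` to `B ≥ A` the spectrum stays between the least eigenvalue of `A`
and the greatest eigenvalue of `B`. -/
lemma spectrum_segment {I : Set ℝ} (hI : I.OrdConnected) {A B : Matrix (Fin 2) (Fin 2) ℂ}
    (hA : A.IsHermitian) (hB : B.IsHermitian) (hAI : spectrum ℝ A ⊆ I) (hBI : spectrum ℝ B ⊆ I)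
    (hAB : A ≤ B) {s : ℝ} (h0 : 0 ≤ s) (h1 : s ≤ 1) : spectrum ℝ (A + s • (B - A)) ⊆ I := by
  have hC : (A + s • (B - A)).IsHermitian :=
    hA.add (by simpa [Matrix.IsHermitian] using congrArg (s • ·) (hB.sub hA))
  have hD : (B - A).PosSemidef := Matrix.le_iff.1 hAB
  have hAC : A ≤ A + s • (B - A) := by
    rw [Matrix.le_iff, add_sub_cancel_left]
    exact hD.smul h0
  have hCB : A + s • (B - A) ≤ B := by
    rw [Matrix.le_iff, show B - (A + s • (B - A)) = (1 - s) • (B - A) by module]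
    exact hD.smul (sub_nonneg.2 h1)
  obtain ⟨m, hm, hm'⟩ : ∃ m ∈ spectrum ℝ A, ∀ x ∈ spectrum ℝ A, m ≤ x := by
    obtain ⟨i, hi⟩ := Finite.exists_min hA.eigenvalues
    refine ⟨_, hA.eigenvalues_mem_spectrum_real i, fun x hx => ?_⟩
    rw [hA.spectrum_real_eq_range_eigenvalues] at hx
    obtain ⟨j, rfl⟩ := hx
    exact hi j
  obtain ⟨M, hM, hM'⟩ : ∃ M ∈ spectrum ℝ B, ∀ x ∈ spectrum ℝ B, x ≤ M := by
    obtain ⟨i, hi⟩ := Finite.exists_max hB.eigenvalues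
    refine ⟨_, hB.eigenvalues_mem_spectrum_real i, fun x hx => ?_⟩
    rw [hB.spectrum_real_eq_range_eigenvalues] at hx
    obtain ⟨j, rfl⟩ := hx
    exact hi j
  intro x hx
  refine hI.out (hAI hm) (hBI hM) ⟨?_, ?_⟩
  · exact (algebraMap_le_iff_le_spectrum hC.isSelfAdjoint).1
      (((algebraMap_le_iff_le_spectrum hA.isSelfAdjoint).2 hm').trans hAC) x hx
  · exact (le_algebraMap_iff_spectrum_le hC.isSelfAdjoint).1
      (hCB.trans ((le_algebraMap_iff_spectrum_le hB.isSelfAdjoint).2 hM')) x hx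

lemma matPoly_mono (a : ℕ → ℝ) {I : Set ℝ} (hI : I.OrdConnected)
    (hN : ∀ t ∈ I, ∀ X Y, 0 ≤ monoForm a t X Y) {A B : Matrix (Fin 2) (Fin 2) ℂ}
    (hA : A.IsHermitian) (hB : B.IsHermitian) (hAI : spectrum ℝ A ⊆ I) (hBI : spectrum ℝ B ⊆ I)
    (hAB : A ≤ B) : (matPoly a B - matPoly a A).PosSemidef := by
  have hherm : ∀ {A : Matrix (Fin 2) (Fin 2) ℂ}, A.IsHermitian → (matPoly a A).IsHermitian := by
    intro A hA
    unfold matPoly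
    rw [Matrix.IsHermitian] at hA ⊢
    simp [Matrix.conjTranspose_mul, hA, Matrix.mul_assoc]
  refine Matrix.PosSemidef.of_dotProduct_mulVec_nonneg ((hherm hB).sub (hherm hA)) fun v => ?_
  let ψ : Matrix (Fin 2) (Fin 2) ℂ →ₗ[ℝ] ℝ :=
    { toFun := fun M => (star v ⬝ᵥ (M *ᵥ v)).re
      map_add' := fun M N => by rw [Matrix.add_mulVec, dotProduct_add, Complex.add_re]
      map_smul' := fun r M => by
        rw [Matrix.smul_mulVec, dotProduct_smul, Complex.smul_re, RingHom.id_apply] }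
  have hmono : MonotoneOn (fun s : ℝ => ψ (matPoly a (A + s • (B - A)))) (Icc 0 1) := by
    have hd : ∀ s : ℝ, HasDerivAt (fun s : ℝ => ψ (matPoly a (A + s • (B - A))))
        (ψ (matDeriv a (A + s • (B - A)) (B - A))) s := fun s =>
      (ψ.toContinuousLinearMap.hasFDerivAt).comp_hasDerivAt s (matPoly_hasDerivAt a A (B - A) s)
    refine monotoneOn_of_deriv_nonneg (convex_Icc 0 1)
      (fun s _ => (hd s).continuousAt.continuousWithinAt)
      (fun s _ => (hd s).differentiableAt.differentiableWithinAt) fun s hs => ?_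
    rw [interior_Icc] at hs
    rw [(hd s).deriv]
    have hP : (matDeriv a (A + s • (B - A)) (B - A)).PosSemidef :=
      matDeriv_posSemidef a I hN
        (hA.add (by simpa [Matrix.IsHermitian] using congrArg (s • ·) (hB.sub hA)))
        (spectrum_segment hI hA hB hAI hBI hAB hs.1.le hs.2.le) (Matrix.le_iff.1 hAB)
    exact (Complex.nonneg_iff.1 (hP.dotProduct_mulVec_nonneg v)).1
  have h := hmono (left_mem_Icc.2 zero_le_one) (right_mem_Icc.2 zero_le_one) zero_le_one
  have hh : (matPoly a B - matPoly a A).IsHermitian := (hherm hB).sub (hherm hA)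
  have h' : 0 ≤ ψ (matPoly a B - matPoly a A) := by
    rw [map_sub]
    simpa using h
  exact Complex.nonneg_iff.2 ⟨h', (hh.im_star_dotProduct_mulVec_self v).symm⟩

/-! ### The term `f(0)/t` and the conclusion -/

lemma inv_anti {A B : Matrix (Fin 2) (Fin 2) ℂ} (hA : A.IsHermitian) (hB : B.IsHermitian)
    (hA0 : ∀ x ∈ spectrum ℝ A, 0 < x) (hB0 : ∀ x ∈ spectrum ℝ B, 0 < x) (hAB : A ≤ B) :
    cfc (fun x : ℝ => x⁻¹) B ≤ cfc (fun x : ℝ => x⁻¹) A := by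
  have hAu : IsUnit A := spectrum.isUnit_of_zero_notMem ℝ fun h => (hA0 0 h).false
  have hBu : IsUnit B := spectrum.isUnit_of_zero_notMem ℝ fun h => (hB0 0 h).false
  obtain ⟨A, rfl⟩ := hAu
  obtain ⟨B, rfl⟩ := hBu
  rw [cfc_inv_id A hA.isSelfAdjoint, cfc_inv_id B hB.isSelfAdjoint]
  refine CStarAlgebra.inv_le_inv ?_ hAB
  have := (algebraMap_le_iff_le_spectrum (r := (0 : ℝ)) hA.isSelfAdjoint).2
    fun x hx => (hA0 x hx).le
  simpa using this

end

/-- The functional calculus of `f(t)/t = (f(t) - f(0))/t + f(0)/t` on a positive definite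
matrix. -/
lemma cfc_div (p : Polynomial ℝ) (hdeg : p.natDegree ≤ 5) {A : Matrix (Fin 2) (Fin 2) ℂ}
    (hA : A.IsHermitian) (hA0 : ∀ x ∈ spectrum ℝ A, 0 < x) :
    cfc (fun t => p.eval t / t) A
      = matPoly p.coeff A + p.coeff 0 • cfc (fun x : ℝ => x⁻¹) A := by
  have hAs := hA.isSelfAdjoint
  have hinv : ContinuousOn (fun x : ℝ => x⁻¹) (spectrum ℝ A) :=
    continuousOn_inv₀.mono fun x hx => (hA0 x hx).ne'
  have h1 : cfc (fun t => p.eval t / t) A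
      = cfc (fun t => p.divX.eval t + p.coeff 0 * t⁻¹) A := by
    refine cfc_congr fun t ht => ?_
    have := (hA0 t ht).ne'
    have hp : p.eval t = t * p.divX.eval t + p.coeff 0 := by
      have := congrArg (Polynomial.eval t) (Polynomial.X_mul_divX_add p)
      simp only [Polynomial.eval_add, Polynomial.eval_mul, Polynomial.eval_X,
        Polynomial.eval_C] at this
      exact this.symm
    simp only [hp]
    field_simp
  rw [h1, cfc_add A (fun t => p.divX.eval t) (fun t => p.coeff 0 * t⁻¹)
      p.divX.continuous.continuousOn (continuousOn_const.mul hinv),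
    cfc_const_mul _ _ _ hinv, cfc_polynomial p.divX A hAs,
    Polynomial.aeval_eq_sum_range' (n := 5)
      (by have := Polynomial.natDegree_divX_eq_natDegree_tsub_one (p := p); omega)]
  congr 1
  simp only [Finset.sum_range_succ, Finset.sum_range_zero, Polynomial.coeff_divX, matPoly,
    pow_succ, pow_zero, one_mul, zero_add]

/-- Proposition 3.6: if `f` is a real polynomial of degree at most 5 with `f(0) ≤ 0` which is
matrix convex of order 2 on `[0,α)`, then `g(t) = f(t)/t` is matrix monotone of order 2 on
`(0,α)`. -/
theorem stmt_12 (α : EReal) (hα : 0 < α) (p : Polynomial ℝ)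
    (hdeg : p.natDegree ≤ 5) (h0 : p.eval 0 ≤ 0)
    (hconv : MatrixConvexOn 2 (fun t => p.eval t) {x : ℝ | 0 ≤ x ∧ (x : EReal) < α}) :
    MatrixMonotoneOn 2 (fun t => p.eval t / t) {x : ℝ | 0 < x ∧ (x : EReal) < α} := by
  intro A B hA hB hAI hBI hAB
  have hc : ∀ t : ℝ, 0 < t → (t : EReal) < α → ∀ X Y, 0 ≤ convForm p.coeff t X Y := by
    intro t ht htα
    obtain ⟨b, hb1, hb2⟩ := EReal.lt_iff_exists_real_btwn.1 htα
    have hb1' : t < b := by exact_mod_cast hb1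
    refine convForm_nonneg p hdeg _ hconv t (min t (b - t)) (lt_min ht (by linarith)) fun l hl => ?_
    have h1 := abs_lt.1 (hl.trans_le (min_le_left _ _))
    have h2 := abs_lt.1 (hl.trans_le (min_le_right _ _))
    refine ⟨by linarith [h1.1], lt_trans ?_ hb2⟩
    exact_mod_cast (by linarith [h2.2] : l < b)
  have hN : ∀ t ∈ {x : ℝ | 0 < x ∧ (x : EReal) < α}, ∀ X Y, 0 ≤ monoForm p.coeff t X Y := by
    rintro t ⟨ht, htα⟩ X Y
    have h35 : ((3 / 5 * t : ℝ) : EReal) < α :=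
      lt_trans (by exact_mod_cast (by linarith : 3 / 5 * t < t)) htα
    have h1 := hc t ht htα X (Y - t * X / 5)
    have h2 := hc (3 / 5 * t) (by positivity) h35 X (Y - t * X / 5)
    have h3 := hc (3 / 5 * t) (by positivity) h35 0 (t * X)
    rw [monoForm_eq]
    linarith
  have hI : {x : ℝ | 0 < x ∧ (x : EReal) < α}.OrdConnected :=
    ⟨fun x hx y hy z hz => ⟨hx.1.trans_le hz.1,
      lt_of_le_of_lt (EReal.coe_le_coe_iff.2 hz.2) hy.2⟩⟩
  have hA0 : ∀ x ∈ spectrum ℝ A, 0 < x := fun x hx => (hAI hx).1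
  have hB0 : ∀ x ∈ spectrum ℝ B, 0 < x := fun x hx => (hBI hx).1
  have h00 : p.coeff 0 ≤ 0 := by rwa [Polynomial.coeff_zero_eq_eval_zero]
  have h1 := matPoly_mono p.coeff hI hN hA hB hAI hBI (Matrix.le_iff.2 hAB)
  have h2 := (Matrix.le_iff.1 (inv_anti hA hB hA0 hB0 (Matrix.le_iff.2 hAB))).smul
    (neg_nonneg.2 h00)
  rw [cfc_div p hdeg hA hA0, cfc_div p hdeg hB hB0]
  convert h1.add h2 using 1
  module
end

section
/- Let n ≥ 2, let 0 < α ≤ ∞, and let f : (0,α) → ℝ be twice continuously differentiable and matrix convex of order n on (0,α). Fix s ∈ (0,α) and define h_s : (0,α) → ℝ by h_s(t) = (f(t) − f(s))/(t − s) for t ≠ s and h_s(s) = f'(s). Then h_s is matrix monotone of order n−1 on (0,α). -/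
/-!
The divided difference `[t, s]_f` is Mathlib's `dslope f s t`. The proof passes through the Loewner
matrix `([x i, x j]_h) = ([x i, x j, s]_f)` of `h = dslope f s`.

*Convexity gives positive Loewner matrices* (`loewner_posSemidef`). Let `T ε` be the matrix
`diag (s, x)` with `ε` written along its border. Midpoint convexity at `T ε`, `T (-ε)` says that the
second difference of `f` is positive semidefinite. Two applications of the identity
`f(Y) = f(c) + (Y - c) [·, c]_f(Y)` (`cfc_eq_dslope`) show that the block of `f(T ε) - f(T 0)` indexed
by `x` has `(i, j)` entry exactly `ε ^ 2` times the corner entry of `[·, x i, x j]_f (T ε)`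
(`cfc_bordered`). Dividing by `ε ^ 2` and letting `ε → 0`, the corner entry tends to
`[s, x i, x j]_f`, because the second divided difference is continuous for `f` of class `C²` and the
functional calculus is continuous in the matrix.

*Positive Loewner matrices give monotonicity* (`matrixMonotoneOn_of_loewner`). The same identity
yields the derivative of `t ↦ h(A + t (B - A))`: in an eigenbasis of the base point it is the Hadamard
product of `B - A` with the Loewner matrix at the eigenvalues (`hasDerivAt_cfc_line`). By the Schur
product theorem it is positive semidefinite, so `h(A) ≤ h(B)`.
-/

open Matrix Set MeasureTheory
open scoped ComplexOrder

open Filter Topology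

/-! ### Divided differences of a `C²` function -/

lemma differentiableAt_dslope_self {f : ℝ → ℝ} {I : Set ℝ} (hI : IsOpen I)
    (hf : ContDiffOn ℝ 2 f I) {a : ℝ} (ha : a ∈ I) : DifferentiableAt ℝ (dslope f a) a := by
  have hfa : ∀ x ∈ I, HasDerivAt f (deriv f x) x := fun x hx =>
    ((hf.differentiableOn (by norm_num)).differentiableAt (hI.mem_nhds hx)).hasDerivAt
  have hf' : HasDerivAt (deriv f) (deriv (deriv f) a) a := by
    have h1 : ContDiffOn ℝ 1 (deriv f) I := hf.deriv_of_isOpen hI (by norm_num)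
    exact ((h1.differentiableOn (by norm_num)).differentiableAt (hI.mem_nhds ha)).hasDerivAt
  -- L'Hôpital's rule, using that `deriv f` is differentiable at `a`.
  have key : Tendsto (fun t => (f t - f a - deriv f a * (t - a)) / (t - a) ^ 2) (𝓝[≠] a)
      (𝓝 (deriv (deriv f) a / 2)) := by
    apply HasDerivAt.lhopital_zero_nhdsNE (f' := fun t => deriv f t - deriv f a)
      (g' := fun t => 2 * (t - a))
    · filter_upwards [nhdsWithin_le_nhds (hI.mem_nhds ha)] with x hx
      have := ((hfa x hx).sub_const (f a)).sub
        (((hasDerivAt_id x).sub_const a).const_mul (deriv f a))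
      simpa [Pi.sub_def] using this
    · refine Eventually.of_forall fun x => ?_
      have := ((hasDerivAt_id x).sub_const a).pow 2
      simpa [Pi.pow_def] using this
    · filter_upwards [self_mem_nhdsWithin] with x hx
      have : x - a ≠ 0 := sub_ne_zero.2 hx
      simpa using this
    · have h1 : ContinuousAt (fun t => f t - f a - deriv f a * (t - a)) a := by
        have := (hfa a ha).continuousAt
        fun_prop
      have := h1.tendsto.mono_left (nhdsWithin_le_nhds (s := {a}ᶜ))
      simpa using this
    · have h1 : ContinuousAt (fun t : ℝ => (t - a) ^ 2) a := by fun_prop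
      have := h1.tendsto.mono_left (nhdsWithin_le_nhds (s := {a}ᶜ))
      simpa using this
    · have := (hasDerivAt_iff_tendsto_slope.1 hf').div_const 2
      refine this.congr' ?_
      filter_upwards [self_mem_nhdsWithin] with x hx
      rw [slope_def_field]
      field_simp
  refine HasDerivAt.differentiableAt (f' := deriv (deriv f) a / 2) ?_
  rw [hasDerivAt_iff_tendsto_slope]
  refine key.congr' ?_
  filter_upwards [self_mem_nhdsWithin] with x hx
  have : x - a ≠ 0 := sub_ne_zero.2 hx
  rw [slope_def_field, dslope_same, dslope_of_ne _ hx, slope_def_field]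
  field_simp

lemma continuousOn_dslope_one {f : ℝ → ℝ} {I : Set ℝ} (hI : IsOpen I)
    (hf : ContDiffOn ℝ 2 f I) {a : ℝ} (ha : a ∈ I) : ContinuousOn (dslope f a) I :=
  (continuousOn_dslope (hI.mem_nhds ha)).2 ⟨hf.continuousOn,
    (hf.differentiableOn (by norm_num)).differentiableAt (hI.mem_nhds ha)⟩

lemma continuousOn_dslope_two {f : ℝ → ℝ} {I : Set ℝ} (hI : IsOpen I)
    (hf : ContDiffOn ℝ 2 f I) {a b : ℝ} (ha : a ∈ I) (hb : b ∈ I) :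
    ContinuousOn (dslope (dslope f a) b) I := by
  refine (continuousOn_dslope (hI.mem_nhds hb)).2 ⟨continuousOn_dslope_one hI hf ha, ?_⟩
  rcases eq_or_ne b a with rfl | hab
  · exact differentiableAt_dslope_self hI hf hb
  · exact (differentiableAt_dslope_of_ne hab).2
      ((hf.differentiableOn (by norm_num)).differentiableAt (hI.mem_nhds hb))

lemma dslope_symm (f : ℝ → ℝ) (a b : ℝ) : dslope f a b = dslope f b a := by
  rcases eq_or_ne a b with rfl | h
  · rfl
  · rw [dslope_of_ne _ h, dslope_of_ne _ h.symm, slope_comm]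

/-- Second divided differences are symmetric under a cyclic permutation of the nodes. Nodes may
coincide: as functions of `b`, both sides are continuous and agree off `{a, c}`. -/
lemma dslope_dslope_symm {f : ℝ → ℝ} {I : Set ℝ} (hI : IsOpen I)
    (hf : ContDiffOn ℝ 2 f I) {a b c : ℝ} (ha : a ∈ I) (hb : b ∈ I) (hc : c ∈ I) :
    dslope (dslope f a) b c = dslope (dslope f c) a b := by
  rw [dslope_symm _ b c]
  rcases eq_or_ne a c with rfl | hac
  · rfl
  have h1 := (continuousOn_dslope_two hI hf ha hc).continuousAt (hI.mem_nhds hb)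
  have h2 := (continuousOn_dslope_two hI hf hc ha).continuousAt (hI.mem_nhds hb)
  refine tendsto_nhds_unique_of_eventuallyEq (h1.tendsto.mono_left nhdsWithin_le_nhds)
    (h2.tendsto.mono_left nhdsWithin_le_nhds) (l := 𝓝[≠] b) ?_
  have hne : ∀ d : ℝ, ∀ᶠ x in 𝓝[≠] b, x ≠ d := by
    intro d
    rcases eq_or_ne b d with rfl | h
    · exact self_mem_nhdsWithin
    · exact nhdsWithin_le_nhds (isOpen_ne.mem_nhds h)
  filter_upwards [hne a, hne c] with x hxa hxc
  rw [dslope_of_ne _ hxc, dslope_of_ne _ hxa, slope_def_field, slope_def_field,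
    dslope_of_ne _ hxa, dslope_of_ne _ hxc, dslope_of_ne _ hac.symm, dslope_of_ne _ hac]
  simp only [slope_def_field]
  have := sub_ne_zero.2 hxa
  have := sub_ne_zero.2 hxc
  have := sub_ne_zero.2 hac
  have := sub_ne_zero.2 hac.symm
  grind

/-! ### Functional calculus of Hermitian matrices -/

section
-- The C⋆-norm is only used in proofs; it induces the entrywise topology on matrices.
open scoped Matrix.Norms.L2Operator

lemma eventually_spectrum_subset {n : ℕ} {I : Set ℝ} (hI : IsOpen I)
    {Y : ℝ → Matrix (Fin n) (Fin n) ℂ} {t₀ : ℝ} (hY : ContinuousAt Y t₀)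
    (hspec : spectrum ℝ (Y t₀) ⊆ I) : ∀ᶠ t in 𝓝 t₀, spectrum ℝ (Y t) ⊆ I := by
  have h := (upperHemicontinuous_spectrum ℝ (Matrix (Fin n) (Fin n) ℂ)).upperHemicontinuousAt
    (Y t₀) I (hI.mem_nhdsSet.2 hspec)
  exact (hY.eventually h).mono fun t ht => subset_of_mem_nhdsSet ht

lemma continuousAt_cfc_path {n : ℕ} {I : Set ℝ} (hI : IsOpen I) {g : ℝ → ℝ}
    (hg : ContinuousOn g I) {Y : ℝ → Matrix (Fin n) (Fin n) ℂ} {t₀ : ℝ}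
    (hY : ContinuousAt Y t₀) (hherm : ∀ t, (Y t).IsHermitian)
    (hspec : spectrum ℝ (Y t₀) ⊆ I) : ContinuousAt (fun t => cfc g (Y t)) t₀ := by
  obtain ⟨S, ⟨hS₁, hS₂⟩, hS₃⟩ :=
    (Matrix.finite_real_spectrum (A := Y t₀)).isCompact.nhdsSet_basis_isCompact.mem_iff.mp
      (hI.mem_nhdsSet.2 hspec)
  have h := (upperHemicontinuous_spectrum ℝ (Matrix (Fin n) (Fin n) ℂ)).upperHemicontinuousAt
    (Y t₀) S hS₁
  exact ContinuousAt.cfc (A := Matrix (Fin n) (Fin n) ℂ) (p := IsSelfAdjoint) hS₂ g hY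
    ((hY.eventually h).mono fun t ht => subset_of_mem_nhdsSet ht)
    (Eventually.of_forall fun t => hherm t) (hg.mono hS₃)

end

lemma continuousOn_spectrum {n : ℕ} (A : Matrix (Fin n) (Fin n) ℂ) (g : ℝ → ℝ) :
    ContinuousOn g (spectrum ℝ A) := Matrix.finite_real_spectrum.continuousOn g

lemma cfc_eq_dslope {n : ℕ} {Y : Matrix (Fin n) (Fin n) ℂ} (hY : Y.IsHermitian) (f : ℝ → ℝ)
    (c : ℝ) : cfc f Y = algebraMap ℝ _ (f c) + (Y - algebraMap ℝ _ c) * cfc (dslope f c) Y := by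
  have hY' : IsSelfAdjoint Y := hY
  have hc := continuousOn_spectrum Y
  have h1 : (fun t => f t) = fun t => f c + (t - c) * dslope f c t := by
    funext t
    have := sub_smul_dslope f c t
    rw [smul_eq_mul] at this
    rw [this]; ring
  conv_lhs => rw [show f = fun t => f c + (t - c) * dslope f c t from h1]
  rw [cfc_const_add (f c) _ Y (hc _) hY', cfc_mul _ _ Y (hc _) (hc _),
    cfc_sub _ _ Y (hc _) (hc _), cfc_id' ℝ Y, cfc_const c Y]

lemma cfc_eq_dslope' {n : ℕ} {Y : Matrix (Fin n) (Fin n) ℂ} (hY : Y.IsHermitian) (f : ℝ → ℝ)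
    (c : ℝ) : cfc f Y = algebraMap ℝ _ (f c) + cfc (dslope f c) Y * (Y - algebraMap ℝ _ c) := by
  rw [cfc_eq_dslope hY f c]
  congr 1
  have h : Commute Y (cfc (dslope f c) Y) := by
    have h1 := cfc_commute_cfc (fun t : ℝ => t) (dslope f c) Y
    rwa [cfc_id' ℝ Y (show IsSelfAdjoint Y from hY)] at h1
  exact (h.sub_left (Algebra.commutes _ _)).eq


open scoped MatrixOrder in
lemma exists_spectrum_le {n : ℕ} {A Y : Matrix (Fin n) (Fin n) ℂ} (hA : A.IsHermitian)
    (hY : Y.IsHermitian) (hAY : (Y - A).PosSemidef) {μ : ℝ} (hμ : μ ∈ spectrum ℝ Y) :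
    ∃ a ∈ spectrum ℝ A, a ≤ μ := by
  by_contra! h
  obtain ⟨r, hr, hr'⟩ : ∃ r, μ < r ∧ ∀ a ∈ spectrum ℝ A, r ≤ a := by
    rcases (spectrum ℝ A).eq_empty_or_nonempty with he | hne
    · exact ⟨μ + 1, by linarith, by simp [he]⟩
    · obtain ⟨r, hr, hr'⟩ := (Matrix.finite_real_spectrum (A := A)).exists_minimal hne
      exact ⟨r, h r hr, fun a ha => (le_total r a).elim id fun hle => hr' ha hle⟩
  have h1 := (algebraMap_le_iff_le_spectrum (R := ℝ) (a := A) (r := r) hA).2 hr'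
  have h2 := (algebraMap_le_iff_le_spectrum (R := ℝ) (a := Y) (r := r) hY).1
    (h1.trans (Matrix.le_iff.2 hAY)) μ hμ
  linarith

open scoped MatrixOrder in
lemma exists_le_spectrum {n : ℕ} {B Y : Matrix (Fin n) (Fin n) ℂ} (hB : B.IsHermitian)
    (hY : Y.IsHermitian) (hYB : (B - Y).PosSemidef) {μ : ℝ} (hμ : μ ∈ spectrum ℝ Y) :
    ∃ b ∈ spectrum ℝ B, μ ≤ b := by
  by_contra! h
  obtain ⟨r, hr, hr'⟩ : ∃ r, r < μ ∧ ∀ b ∈ spectrum ℝ B, b ≤ r := by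
    rcases (spectrum ℝ B).eq_empty_or_nonempty with he | hne
    · exact ⟨μ - 1, by linarith, by simp [he]⟩
    · obtain ⟨r, hr, hr'⟩ := (Matrix.finite_real_spectrum (A := B)).exists_maximal hne
      exact ⟨r, h r hr, fun a ha => (le_total a r).elim id fun hle => hr' ha hle⟩
  have h1 := (le_algebraMap_iff_spectrum_le (R := ℝ) (a := B) (r := r) hB).2 hr'
  have h2 := (le_algebraMap_iff_spectrum_le (R := ℝ) (a := Y) (r := r) hY).1
    ((Matrix.le_iff.2 hYB).trans h1) μ hμ
  linarith

lemma spectrum_subset_of_le {n : ℕ} {I : Set ℝ} (hI : I.OrdConnected)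
    {A Y B : Matrix (Fin n) (Fin n) ℂ} (hA : A.IsHermitian) (hY : Y.IsHermitian)
    (hB : B.IsHermitian) (hAI : spectrum ℝ A ⊆ I) (hBI : spectrum ℝ B ⊆ I)
    (hAY : (Y - A).PosSemidef) (hYB : (B - Y).PosSemidef) : spectrum ℝ Y ⊆ I := by
  intro μ hμ
  obtain ⟨a, ha, haμ⟩ := exists_spectrum_le hA hY hAY hμ
  obtain ⟨b, hb, hμb⟩ := exists_le_spectrum hB hY hYB hμ
  exact hI.out (hAI ha) (hBI hb) ⟨haμ, hμb⟩

/-! ### Second differences along a bordered diagonal matrix -/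

/-- The bordered diagonal matrix `[[s, ε ⋯ ε], [ε, diag x]]`: the real diagonal matrix
`diag (s, x)` perturbed by `ε` along the border. -/
noncomputable def bordered {m : ℕ} (s : ℝ) (x : Fin m → ℝ) (ε : ℝ) :
    Matrix (Fin (m + 1)) (Fin (m + 1)) ℂ :=
  Matrix.of (Fin.cons (Fin.cons (s : ℂ) fun _ => (ε : ℂ))
    fun i => Fin.cons (ε : ℂ) fun j => if i = j then (x i : ℂ) else 0)

section
variable {m : ℕ} (s : ℝ) (x : Fin m → ℝ) (ε : ℝ)

@[simp] lemma bordered_zero_zero : bordered s x ε 0 0 = s := rfl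
@[simp] lemma bordered_zero_succ (j : Fin m) : bordered s x ε 0 j.succ = ε := rfl
@[simp] lemma bordered_succ_zero (i : Fin m) : bordered s x ε i.succ 0 = ε := rfl
@[simp] lemma bordered_succ_succ (i j : Fin m) :
    bordered s x ε i.succ j.succ = if i = j then (x i : ℂ) else 0 := rfl

lemma bordered_isHermitian : (bordered s x ε).IsHermitian := by
  ext k l
  refine Fin.cases ?_ (fun i => ?_) k <;> refine Fin.cases ?_ (fun j => ?_) l <;>
    simp [Matrix.conjTranspose_apply]
  rcases eq_or_ne i j with rfl | h
  · simp
  · simp [h, h.symm]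

lemma bordered_average : (1 / 2 : ℝ) • bordered s x ε + (1 - 1 / 2 : ℝ) • bordered s x (-ε) =
    bordered s x 0 := by
  ext k l
  refine Fin.cases ?_ (fun i => ?_) k <;> refine Fin.cases ?_ (fun j => ?_) l <;>
    simp [Matrix.add_apply, Matrix.smul_apply] <;> (try split_ifs) <;> (try simp) <;> try ring

lemma bordered_zero_eq :
    bordered s x 0 = diagonal fun k => ((Fin.cons s x : Fin (m + 1) → ℝ) k : ℂ) := by
  ext k l
  refine Fin.cases ?_ (fun i => ?_) k <;> refine Fin.cases ?_ (fun j => ?_) l <;>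
    simp [diagonal_apply, Fin.succ_ne_zero, (Fin.succ_ne_zero _).symm]

lemma spectrum_bordered_zero {I : Set ℝ} (hs : s ∈ I) (hx : ∀ i, x i ∈ I) :
    spectrum ℝ (bordered s x 0) ⊆ I := by
  intro μ hμ
  rw [bordered_zero_eq, spectrum.mem_iff, Matrix.algebraMap_eq_diagonal, diagonal_sub,
    Matrix.isUnit_diagonal, Pi.isUnit_iff] at hμ
  push Not at hμ
  obtain ⟨k, hk⟩ := hμ
  simp [sub_eq_zero] at hk
  rw [hk]
  refine Fin.cases ?_ (fun i => ?_) k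
  · exact hs
  · exact hx i

lemma continuous_bordered : Continuous (bordered s x) := by
  refine continuous_matrix fun k l => ?_
  refine Fin.cases ?_ (fun i => ?_) k <;> refine Fin.cases ?_ (fun j => ?_) l <;> simp <;> fun_prop

/-- Expanding `f` at `x i` on the left and then at `x j` on the right expresses the `(i, j)` entry
of `f` at the bordered matrix *exactly* through a second divided difference, evaluated at the
corner where the limit `ε → 0` sees only `s`. -/
lemma cfc_bordered (f : ℝ → ℝ) (i j : Fin m) :
    cfc f (bordered s x ε) i.succ j.succ = (if i = j then (f (x i) : ℂ) else 0) +
      (ε : ℂ) ^ 2 * cfc (dslope (dslope f (x i)) (x j)) (bordered s x ε) 0 0 := by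
  have hT := bordered_isHermitian s x ε
  have h2 : cfc (dslope f (x i)) (bordered s x ε) 0 j.succ =
      ε * cfc (dslope (dslope f (x i)) (x j)) (bordered s x ε) 0 0 := by
    rw [cfc_eq_dslope' hT _ (x j), Matrix.add_apply, Matrix.mul_apply, Fin.sum_univ_succ,
      Finset.sum_eq_zero]
    · simp [Matrix.algebraMap_matrix_apply, (Fin.succ_ne_zero _).symm, mul_comm]
    · intro k _
      rcases eq_or_ne k j with rfl | h
      · simp [Matrix.algebraMap_matrix_apply]
      · simp [Matrix.algebraMap_matrix_apply, h]
  rw [cfc_eq_dslope hT _ (x i), Matrix.add_apply, Matrix.mul_apply, Fin.sum_univ_succ,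
    Finset.sum_eq_zero, h2]
  · simp [Matrix.algebraMap_matrix_apply, Fin.succ_ne_zero]
    ring
  · intro k _
    rcases eq_or_ne i k with rfl | h
    · simp [Matrix.algebraMap_matrix_apply]
    · simp [Matrix.algebraMap_matrix_apply, h]

lemma cfc_bordered_zero (g : ℝ → ℝ) : cfc g (bordered s x 0) 0 0 = g s := by
  rw [cfc_eq_dslope (bordered_isHermitian s x 0) _ s, Matrix.add_apply, Matrix.mul_apply,
    Fin.sum_univ_succ, Finset.sum_eq_zero]
  · simp [Matrix.algebraMap_matrix_apply]
  · intro k _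
    simp [Matrix.algebraMap_matrix_apply, (Fin.succ_ne_zero _).symm]

end

/-- The Loewner matrix of `dslope f s` is positive semidefinite: it is the limit as `ε → 0` of the
lower right blocks of the second differences of `f` between `bordered s x ε` and
`bordered s x (-ε)`, divided by `ε ^ 2`. -/
lemma loewner_posSemidef_s13 {m : ℕ} {f : ℝ → ℝ} {I : Set ℝ} (hI : IsOpen I)
    (hf : ContDiffOn ℝ 2 f I) (hconv : MatrixConvexOn (m + 1) f I) {s : ℝ} (hs : s ∈ I)
    {x : Fin m → ℝ} (hx : ∀ i, x i ∈ I) :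
    (Matrix.of fun i j => ((dslope (dslope f s) (x i) (x j) : ℝ) : ℂ)).PosSemidef := by
  have hcont : ContinuousAt (bordered s x) 0 := (continuous_bordered s x).continuousAt
  have hneg : Tendsto (fun ε : ℝ => -ε) (𝓝 0) (𝓝 0) := by
    simpa using (continuous_neg (G := ℝ)).tendsto 0
  have hspec := eventually_spectrum_subset hI hcont (spectrum_bordered_zero s x hs hx)
  -- `N ε` is the lower right block of the second difference of `f`, divided by `ε ^ 2`.
  let N : ℝ → Matrix (Fin m) (Fin m) ℂ := fun ε => Matrix.of fun i j =>
    (1 / 2 : ℂ) * (cfc (dslope (dslope f (x i)) (x j)) (bordered s x ε) 0 0 +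
      cfc (dslope (dslope f (x i)) (x j)) (bordered s x (-ε)) 0 0)
  have hN : ∀ᶠ ε in 𝓝[≠] (0 : ℝ), (N ε).PosSemidef := by
    filter_upwards [nhdsWithin_le_nhds hspec, nhdsWithin_le_nhds (hneg.eventually hspec),
      self_mem_nhdsWithin] with ε h1 h2 h3
    have hP := (hconv _ _ (bordered_isHermitian s x ε) (bordered_isHermitian s x (-ε)) h1 h2
      (1 / 2) (by norm_num) (by norm_num)).submatrix (Fin.succ : Fin m → Fin (m + 1))
    rw [bordered_average] at hP
    have hε : (ε : ℂ) ≠ 0 := by exact_mod_cast h3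
    have hpos : (0 : ℝ) ≤ (ε ^ 2)⁻¹ := by positivity
    convert hP.smul hpos using 1
    ext i j
    simp only [N, Matrix.of_apply, Matrix.smul_apply, Matrix.submatrix_apply, Matrix.sub_apply,
      Matrix.add_apply, cfc_bordered, Complex.real_smul]
    push_cast
    field_simp
    ring
  have hlim : ∀ i j, Tendsto (fun ε => N ε i j) (𝓝[≠] (0 : ℝ))
      (𝓝 ((dslope (dslope f s) (x i) (x j) : ℝ) : ℂ)) := by
    intro i j
    have hc := continuousAt_cfc_path hI (continuousOn_dslope_two hI hf (hx i) (hx j)) hcont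
      (bordered_isHermitian s x) (spectrum_bordered_zero s x hs hx)
    have hc0 : Tendsto (fun ε => cfc (dslope (dslope f (x i)) (x j)) (bordered s x ε) 0 0) (𝓝 0)
        (𝓝 ((dslope (dslope f s) (x i) (x j) : ℝ) : ℂ)) := by
      have := (continuous_id.matrix_elem (0 : Fin (m + 1)) 0).continuousAt.comp_of_eq hc rfl
      have := this.tendsto
      simpa only [Function.comp_def, id, cfc_bordered_zero,
        dslope_dslope_symm hI hf (hx i) (hx j) hs] using this
    have hsum := (hc0.add (hc0.comp hneg)).const_mul (1 / 2 : ℂ)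
    rw [← two_mul, ← mul_assoc, one_div, inv_mul_cancel₀ two_ne_zero, one_mul, ← one_div] at hsum
    exact hsum.mono_left nhdsWithin_le_nhds
  rw [Matrix.posSemidef_iff_dotProduct_mulVec]
  refine ⟨?_, fun y => ?_⟩
  · ext i j
    simp [Matrix.conjTranspose_apply, dslope_symm _ (x i) (x j)]
  · have ht : Tendsto (fun ε => star y ⬝ᵥ N ε *ᵥ y) (𝓝[≠] (0 : ℝ))
        (𝓝 (star y ⬝ᵥ
          (Matrix.of fun i j => ((dslope (dslope f s) (x i) (x j) : ℝ) : ℂ)) *ᵥ y)) := by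
      simp only [dotProduct, mulVec]
      exact tendsto_finsetSum _ fun i _ => (tendsto_finsetSum _ fun j _ =>
        (hlim i j).mul_const _).const_mul _
    exact ge_of_tendsto ht (hN.mono fun ε h => (Matrix.posSemidef_iff_dotProduct_mulVec.1 h).2 y)

/-! ### Monotonicity from positive Loewner matrices -/

lemma hasDerivAt_of_eq_add_mul {u w : ℝ → ℂ} {c : ℂ} {t₀ : ℝ}
    (hu : ∀ t, u t = c + ((t - t₀ : ℝ) : ℂ) * w t) (hw : ContinuousAt w t₀) :
    HasDerivAt u (w t₀) t₀ := by
  rw [hasDerivAt_iff_tendsto_slope]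
  refine (hw.tendsto.mono_left nhdsWithin_le_nhds).congr' ?_
  filter_upwards [self_mem_nhdsWithin] with t ht
  have h : ((t - t₀ : ℝ) : ℂ) ≠ 0 := by exact_mod_cast sub_ne_zero.2 ht
  rw [slope_def_module, hu, hu, sub_self, Complex.ofReal_zero, zero_mul, add_zero,
    add_sub_cancel_left, Complex.real_smul, Complex.ofReal_inv, inv_mul_cancel_left₀ h]

lemma cfc_mul_eigenvectorUnitary {m : ℕ} {X : Matrix (Fin m) (Fin m) ℂ} (hX : X.IsHermitian)
    (g : ℝ → ℝ) : cfc g X * (hX.eigenvectorUnitary : Matrix (Fin m) (Fin m) ℂ) =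
      hX.eigenvectorUnitary * diagonal fun i => ((g (hX.eigenvalues i) : ℝ) : ℂ) := by
  rw [hX.cfc_eq, Matrix.IsHermitian.cfc, Unitary.conjStarAlgAut_apply, mul_assoc,
    Unitary.coe_star_mul_self, mul_one]
  rfl

lemma star_eigenvectorUnitary_mul {m : ℕ} {X : Matrix (Fin m) (Fin m) ℂ} (hX : X.IsHermitian) :
    star (hX.eigenvectorUnitary : Matrix (Fin m) (Fin m) ℂ) * X =
      diagonal (fun i => (hX.eigenvalues i : ℂ)) *
        star (hX.eigenvectorUnitary : Matrix (Fin m) (Fin m) ℂ) := by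
  have h := congrArg star (cfc_mul_eigenvectorUnitary hX fun t => t)
  rw [cfc_id' ℝ X (show IsSelfAdjoint X from hX), star_mul, star_mul] at h
  have hX' : star X = X := hX
  rw [hX'] at h
  rw [h]
  congr 1
  rw [star_eq_conjTranspose, diagonal_conjTranspose]
  congr 1
  funext i
  simp

/-- Daleckii–Krein formula along a line, in an eigenbasis of the base point: the derivative is the
Hadamard product of the Loewner matrix with the direction. -/
lemma hasDerivAt_cfc_line {m : ℕ} {h : ℝ → ℝ} {I : Set ℝ} (hI : IsOpen I)
    (hh : ∀ a ∈ I, ContinuousOn (dslope h a) I) {A H : Matrix (Fin m) (Fin m) ℂ}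
    (t₀ : ℝ)
    (hherm : ∀ t : ℝ, (A + t • H).IsHermitian) (hspec : spectrum ℝ (A + t₀ • H) ⊆ I)
    (i j : Fin m) :
    HasDerivAt (fun t : ℝ => (star ((hherm t₀).eigenvectorUnitary : Matrix (Fin m) (Fin m) ℂ) *
        cfc h (A + t • H) * (hherm t₀).eigenvectorUnitary) i j)
      ((star ((hherm t₀).eigenvectorUnitary : Matrix (Fin m) (Fin m) ℂ) * H *
          (hherm t₀).eigenvectorUnitary) i j *
        ((dslope h ((hherm t₀).eigenvalues i) ((hherm t₀).eigenvalues j) : ℝ) : ℂ)) t₀ := by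
  set U := ((hherm t₀).eigenvectorUnitary : Matrix (Fin m) (Fin m) ℂ) with hU
  set d := (hherm t₀).eigenvalues with hd
  have hUU : star U * U = 1 := Unitary.coe_star_mul_self _
  have hdI : d i ∈ I := hspec ((hherm t₀).eigenvalues_mem_spectrum_real i)
  let w : ℝ → ℂ := fun t => (star U * H * cfc (dslope h (d i)) (A + t • H) * U) i j
  have hw0 : w t₀ = (star U * H * U) i j * ((dslope h (d i) (d j) : ℝ) : ℂ) := by
    simp only [w]
    rw [mul_assoc, cfc_mul_eigenvectorUnitary (hherm t₀), ← mul_assoc, mul_diagonal]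
  have hw : ContinuousAt w t₀ := by
    have hc := continuousAt_cfc_path hI (hh _ hdI) (Y := fun t : ℝ => A + t • H) (t₀ := t₀)
      (by fun_prop) hherm hspec
    have hm : Continuous fun Z : Matrix (Fin m) (Fin m) ℂ => (star U * H * Z * U) i j :=
      ((continuous_const.matrix_mul continuous_id).matrix_mul continuous_const).matrix_elem i j
    exact hm.continuousAt.comp_of_eq hc rfl
  rw [← hw0]
  refine hasDerivAt_of_eq_add_mul (c := if i = j then (h (d i) : ℂ) else 0) (fun t => ?_) hw
  have hsplit : star U * (A + t • H) = diagonal (fun i => (d i : ℂ)) * star U +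
      (t - t₀) • (star U * H) := by
    rw [← star_eigenvectorUnitary_mul (hherm t₀), ← hU, sub_smul, mul_add, mul_add,
      mul_smul_comm, mul_smul_comm]
    abel
  -- Row `i` of `diag d - d i` vanishes, so in the `(i, j)` entry only the first and the last
  -- summand of this expansion survive.
  have hexp : star U * cfc h (A + t • H) * U = (h (d i)) • (1 : Matrix (Fin m) (Fin m) ℂ) +
      (diagonal (fun k => (d k : ℂ)) - algebraMap ℝ _ (d i)) *
        (star U * cfc (dslope h (d i)) (A + t • H) * U) +
      (t - t₀) • (star U * H * cfc (dslope h (d i)) (A + t • H) * U) := by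
    rw [cfc_eq_dslope (hherm t) h (d i), mul_add, add_mul, ← Algebra.commutes, mul_assoc _ (star U),
      hUU, ← mul_assoc, mul_sub, hsplit, ← Algebra.commutes]
    simp only [Algebra.algebraMap_eq_smul_one]
    simp only [mul_one, add_mul, sub_mul, smul_mul_assoc, one_mul, mul_assoc]
    abel
  rw [hexp, Matrix.add_apply, Matrix.add_apply, Matrix.algebraMap_eq_diagonal, diagonal_sub,
    diagonal_mul]
  simp [w, Matrix.one_apply]

/-- Along the segment from `A` to `B`, every quadratic form of `h` has derivative given by the
Hadamard product of a Loewner matrix with a congruence of `B - A`; this is nonnegative by the Schur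
product theorem. -/
lemma matrixMonotoneOn_of_loewner {m : ℕ} {h : ℝ → ℝ} {I : Set ℝ} (hI : IsOpen I)
    (hI' : I.OrdConnected) (hh : ∀ a ∈ I, ContinuousOn (dslope h a) I)
    (hL : ∀ x : Fin m → ℝ, (∀ i, x i ∈ I) →
      (Matrix.of fun i j => ((dslope h (x i) (x j) : ℝ) : ℂ)).PosSemidef) :
    MatrixMonotoneOn m h I := by
  intro A B hA hB hAI hBI hAB
  set H := B - A with hHdef
  have hH : H.IsHermitian := hAB.1
  have hherm : ∀ t : ℝ, (A + t • H).IsHermitian := fun t => hA.add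
    (IsSelfAdjoint.smul (IsSelfAdjoint.all t) hH)
  have hspec : ∀ t ∈ Icc (0 : ℝ) 1, spectrum ℝ (A + t • H) ⊆ I := by
    intro t ht
    refine spectrum_subset_of_le hI' hA (hherm t) hB hAI hBI ?_ ?_
    · rw [add_sub_cancel_left]
      exact hAB.smul ht.1
    · have : B - (A + t • H) = (1 - t) • H := by
        rw [sub_smul, one_smul, hHdef]; abel
      rw [this]
      exact hAB.smul (sub_nonneg.2 ht.2)
  have hcfc : ∀ Y : Matrix (Fin m) (Fin m) ℂ, (cfc h Y).IsHermitian := fun Y =>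
    cfc_predicate (p := IsSelfAdjoint) h Y
  rw [Matrix.posSemidef_iff_dotProduct_mulVec]
  refine ⟨(hcfc B).sub (hcfc A), fun y => ?_⟩
  let q : ℝ → ℝ := fun t => (star y ⬝ᵥ cfc h (A + t • H) *ᵥ y).re
  have hq : ∀ t ∈ Icc (0 : ℝ) 1, ∃ q', 0 ≤ q' ∧ HasDerivAt q q' t := by
    intro t₀ ht₀
    set U := ((hherm t₀).eigenvectorUnitary : Matrix (Fin m) (Fin m) ℂ) with hU
    set d := (hherm t₀).eigenvalues with hd
    have hdI : ∀ i, d i ∈ I := fun i =>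
      hspec t₀ ht₀ ((hherm t₀).eigenvalues_mem_spectrum_real i)
    have hUU : U * star U = 1 := Unitary.coe_mul_star_self _
    let z := star U *ᵥ y
    have hform : ∀ Z : Matrix (Fin m) (Fin m) ℂ,
        star y ⬝ᵥ Z *ᵥ y = star z ⬝ᵥ (star U * Z * U) *ᵥ z := by
      intro Z
      simp only [z]
      rw [star_mulVec, ← dotProduct_mulVec, mulVec_mulVec, mulVec_mulVec, star_eq_conjTranspose,
        conjTranspose_conjTranspose, ← star_eq_conjTranspose]
      congr 2
      calc Z = (U * star U) * Z * (U * star U) := by rw [hUU, one_mul, mul_one]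
        _ = _ := by simp only [mul_assoc]
    have hK : (star U * H * U).PosSemidef := by
      rw [star_eq_conjTranspose]
      exact hAB.conjTranspose_mul_mul_same U
    have hder : HasDerivAt (fun t : ℝ => star y ⬝ᵥ cfc h (A + t • H) *ᵥ y)
        (star z ⬝ᵥ ((star U * H * U) ⊙
          (Matrix.of fun i j => ((dslope h (d i) (d j) : ℝ) : ℂ))) *ᵥ z) t₀ := by
      simp only [hform]
      simp only [dotProduct, mulVec]
      refine HasDerivAt.fun_sum fun i _ => (HasDerivAt.fun_sum fun j _ => ?_).const_mul _
      exact (hasDerivAt_cfc_line hI hh t₀ hherm (hspec t₀ ht₀) i j).mul_const _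
    refine ⟨_, ?_, (Complex.reCLM.hasFDerivAt.comp_hasDerivAt t₀ hder)⟩
    have := (Matrix.posSemidef_iff_dotProduct_mulVec.1 (hK.hadamard (hL d hdI))).2 z
    exact (Complex.le_def.1 this).1
  have hmono : MonotoneOn q (Icc 0 1) := by
    refine monotoneOn_of_deriv_nonneg (convex_Icc 0 1) (fun t ht => ?_) (fun t ht => ?_)
      (fun t ht => ?_)
    · obtain ⟨q', -, hq'⟩ := hq t ht
      exact hq'.continuousAt.continuousWithinAt
    · obtain ⟨q', -, hq'⟩ := hq t (interior_subset ht)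
      exact hq'.differentiableAt.differentiableWithinAt
    · obtain ⟨q', h0, hq'⟩ := hq t (interior_subset ht)
      rwa [hq'.deriv]
  have h01 := hmono (left_mem_Icc.2 zero_le_one) (right_mem_Icc.2 zero_le_one) zero_le_one
  simp only [q, zero_smul, add_zero, one_smul, hHdef, add_sub_cancel] at h01
  rw [Complex.le_def]
  refine ⟨?_, ?_⟩
  · rw [sub_mulVec, dotProduct_sub, Complex.sub_re]
    simpa using h01
  · exact (((hcfc B).sub (hcfc A)).im_star_dotProduct_mulVec_self y).symm

/-- The key step in the proof of Theorem 3.2: if `f` is `C²` and matrix convex of order `n` on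
`(0,α)`, then for each fixed `s ∈ (0,α)` the divided difference `h_s(t) = [t,s]_f` is matrix
monotone of order `n - 1` on `(0,α)`. -/
theorem stmt_13 (n : ℕ) (hn : 2 ≤ n) (α : EReal) (hα : 0 < α) (f : ℝ → ℝ)
    (hf : ContDiffOn ℝ 2 f {x : ℝ | 0 < x ∧ (x : EReal) < α})
    (hconv : MatrixConvexOn n f {x : ℝ | 0 < x ∧ (x : EReal) < α})
    (s : ℝ) (hs : 0 < s) (hsα : (s : EReal) < α) :
    MatrixMonotoneOn (n - 1)
      (fun t => if t = s then deriv f s else (f t - f s) / (t - s))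
      {x : ℝ | 0 < x ∧ (x : EReal) < α} := by
  obtain ⟨m, rfl⟩ : ∃ m, n = m + 1 := ⟨n - 1, by omega⟩
  set I : Set ℝ := {x : ℝ | 0 < x ∧ (x : EReal) < α} with hIdef
  have hI : IsOpen I := (isOpen_lt continuous_const continuous_id).inter
    (isOpen_lt continuous_coe_real_ereal continuous_const)
  have hI' : I.OrdConnected := ⟨fun x hx y hy z hz =>
    ⟨hx.1.trans_le hz.1, (EReal.coe_le_coe_iff.2 hz.2).trans_lt hy.2⟩⟩
  have hsI : s ∈ I := ⟨hs, hsα⟩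
  have hfun : (fun t => if t = s then deriv f s else (f t - f s) / (t - s)) = dslope f s := by
    funext t
    split_ifs with ht
    · rw [ht, dslope_same]
    · rw [dslope_of_ne _ ht, slope_def_field]
  rw [hfun, Nat.add_sub_cancel]
  exact matrixMonotoneOn_of_loewner hI hI' (fun a ha => continuousOn_dslope_two hI hf hsI ha)
    fun x hx => loewner_posSemidef_s13 hI hf hconv hsI hx
end

section
/- Let 0 < α ≤ ∞ and let f : [0,α) → ℝ be continuous with f(0) ≤ 0 and matrix convex of order 2 on [0,α). Define g(t) = f(t)/t on (0,α) and let G : (0,α) → ℝ be any antiderivative of g (i.e. G' = g on (0,α)). Then G is matrix convex of order 2 on (0,α). -/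
/-!
Up to an additive constant, `G t = f 0 * log t + ∫₀¹ (f (u t) - f 0) / u du`: a superposition of
the dilates `t ↦ f (u t)`, which are matrix convex of the same order as `f`, of constants, and of
`f 0 * log`, which is matrix convex because `f 0 ≤ 0` and `log` is operator concave.

The integral may diverge at `u = 0`, so the argument is run on increments. For fixed matrices and a
fixed test vector, the quadratic form of the convexity gap of any function `φ` is a finite sum
`∑ w k * φ (p k)` with real weights and nodes in `(0, α)` independent of `φ`
(`exists_weights_gap`). The weights have sum zero, and `S u = ∑ w k * G (u * p k)` has derivative
`(∑ w k * f (u * p k)) / u ≥ 0` on `(0, 1]`. As `u → 0`, continuity of `f` at `0` gives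
`S u → f 0 * ∑ w k * log (p k)` (`tendsto_antideriv_increment`), which is nonnegative by operator
concavity of `log` (`posSemidef_log_gap`). Hence `S 1 ≥ 0` (`sum_antideriv_nonneg`).
-/

open Matrix Set MeasureTheory
open scoped ComplexOrder

/-- For fixed `x`, the quadratic form `φ ↦ ⟪x, φ(A) x⟫` is evaluation against a discrete real
measure on the eigenvalues of `A`. -/
lemma exists_weights_quadForm_cfc {n : ℕ} {A : Matrix (Fin n) (Fin n) ℂ} (hA : A.IsHermitian)
    (x : Fin n → ℂ) : ∃ w : Fin n → ℝ, ∀ φ : ℝ → ℝ,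
      star x ⬝ᵥ (cfc φ A *ᵥ x) = ((∑ i, w i * φ (hA.eigenvalues i) : ℝ) : ℂ) := by
  set U := (hA.eigenvectorUnitary : Matrix (Fin n) (Fin n) ℂ) with hU
  refine ⟨fun i => Complex.normSq ((star U *ᵥ x) i), fun φ => ?_⟩
  rw [hA.cfc_eq, IsHermitian.cfc, Unitary.conjStarAlgAut_apply, ← hU, ← mulVec_mulVec,
    ← mulVec_mulVec, dotProduct_mulVec]
  have : star x ᵥ* U = star (star U *ᵥ x) := by
    rw [star_mulVec, star_eq_conjTranspose, conjTranspose_conjTranspose]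
  rw [this, dotProduct]
  push_cast
  refine Finset.sum_congr rfl fun i _ => ?_
  rw [mulVec_diagonal, Complex.normSq_eq_conj_mul_self]
  simp only [Pi.star_apply, Function.comp_apply, RCLike.star_def, Complex.coe_algebraMap]
  ring

/-- A convex combination of Hermitian matrices with spectra in an interval has its spectrum in
that interval. -/
lemma spectrum_convexComb_subset {n : ℕ} {A B : Matrix (Fin n) (Fin n) ℂ} (hA : A.IsHermitian)
    (hB : B.IsHermitian) {I : Set ℝ} (hI : I.OrdConnected) (hAI : spectrum ℝ A ⊆ I)
    (hBI : spectrum ℝ B ⊆ I) {l : ℝ} (h0 : 0 ≤ l) (h1 : l ≤ 1) :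
    spectrum ℝ (l • A + (1 - l) • B) ⊆ I := by
  open scoped MatrixOrder in
  intro z hz
  have hC : (l • A + (1 - l) • B).IsHermitian :=
    (hA.smul (IsSelfAdjoint.all l)).add (hB.smul (IsSelfAdjoint.all (1 - l)))
  have hne : (spectrum ℝ A ∪ spectrum ℝ B).Nonempty := by
    have : Nonempty (Fin n) := by
      rw [hC.spectrum_real_eq_range_eigenvalues] at hz
      obtain ⟨i, _⟩ := hz
      exact ⟨i⟩
    rw [hA.spectrum_real_eq_range_eigenvalues]
    exact (range_nonempty _).inl
  have hfin : (spectrum ℝ A ∪ spectrum ℝ B).Finite := by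
    rw [hA.spectrum_real_eq_range_eigenvalues, hB.spectrum_real_eq_range_eigenvalues]
    exact (finite_range _).union (finite_range _)
  obtain ⟨m, hm, hm'⟩ := hfin.exists_minimalFor id _ hne
  obtain ⟨M, hM, hM'⟩ := hfin.exists_maximalFor id _ hne
  have lo : ∀ y ∈ spectrum ℝ A ∪ spectrum ℝ B, m ≤ y := fun y hy =>
    (le_total m y).elim id fun h => hm' hy h
  have hi : ∀ y ∈ spectrum ℝ A ∪ spectrum ℝ B, y ≤ M := fun y hy =>
    (le_total y M).elim id fun h => hM' hy h
  have hmem : ∀ y ∈ spectrum ℝ A ∪ spectrum ℝ B, y ∈ I := fun y hy => hy.elim (@hAI y) (@hBI y)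
  have comb (r : ℝ) : algebraMap ℝ (Matrix (Fin n) (Fin n) ℂ) r =
      l • algebraMap ℝ _ r + (1 - l) • algebraMap ℝ _ r := by
    rw [← add_smul]; simp
  refine hI.out (hmem m hm) (hmem M hM) ⟨?_, ?_⟩
  · refine (algebraMap_le_iff_le_spectrum (ha := hC.isSelfAdjoint)).1 ?_ z hz
    rw [comb]
    have a := (algebraMap_le_iff_le_spectrum (ha := hA.isSelfAdjoint)).2 fun y hy => lo y (.inl hy)
    have b := (algebraMap_le_iff_le_spectrum (ha := hB.isSelfAdjoint)).2 fun y hy => lo y (.inr hy)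
    exact add_le_add (smul_le_smul_of_nonneg_left a h0)
      (smul_le_smul_of_nonneg_left b (sub_nonneg.2 h1))
  · refine (le_algebraMap_iff_spectrum_le (ha := hC.isSelfAdjoint)).1 ?_ z hz
    rw [comb]
    have a := (le_algebraMap_iff_spectrum_le (ha := hA.isSelfAdjoint)).2 fun y hy => hi y (.inl hy)
    have b := (le_algebraMap_iff_spectrum_le (ha := hB.isSelfAdjoint)).2 fun y hy => hi y (.inr hy)
    exact add_le_add (smul_le_smul_of_nonneg_left a h0)
      (smul_le_smul_of_nonneg_left b (sub_nonneg.2 h1))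

open scoped MatrixOrder Matrix.Norms.L2Operator in
/-- The negative logarithm is matrix convex of every order on the positive half-line. -/
lemma posSemidef_log_gap {n : ℕ} {A B : Matrix (Fin n) (Fin n) ℂ} (hA : A.IsHermitian)
    (hB : B.IsHermitian) (hAI : ∀ y ∈ spectrum ℝ A, 0 < y) (hBI : ∀ y ∈ spectrum ℝ B, 0 < y)
    {l : ℝ} (h0 : 0 ≤ l) (h1 : l ≤ 1) :
    (cfc Real.log (l • A + (1 - l) • B) -
      (l • cfc Real.log A + (1 - l) • cfc Real.log B)).PosSemidef := by
  have pos {X : Matrix (Fin n) (Fin n) ℂ} (hX : X.IsHermitian) (h : ∀ y ∈ spectrum ℝ X, 0 < y) :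
      IsStrictlyPositive X :=
    (StarOrderedRing.isStrictlyPositive_iff_spectrum_pos X hX.isSelfAdjoint).2 h
  have := (CFC.concaveOn_log (A := Matrix (Fin n) (Fin n) ℂ)).2 (pos hA hAI) (pos hB hBI) h0
    (sub_nonneg.2 h1) (by ring)
  exact Matrix.le_iff.1 this

/-- For fixed `A`, `B`, `l` and `x`, the quadratic form of the convexity gap
`l φ(A) + (1 - l) φ(B) - φ(l A + (1 - l) B)` at `x` is evaluation of `φ` against a discrete
signed measure supported in the interval `I`. -/
lemma exists_weights_gap {n : ℕ} {A B : Matrix (Fin n) (Fin n) ℂ} (hA : A.IsHermitian)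
    (hB : B.IsHermitian) {I : Set ℝ} (hI : I.OrdConnected) (hAI : spectrum ℝ A ⊆ I)
    (hBI : spectrum ℝ B ⊆ I) {l : ℝ} (h0 : 0 ≤ l) (h1 : l ≤ 1) (x : Fin n → ℂ) :
    ∃ w p : Fin n ⊕ Fin n ⊕ Fin n → ℝ, (∀ k, p k ∈ I) ∧ ∀ φ : ℝ → ℝ,
      star x ⬝ᵥ ((l • cfc φ A + (1 - l) • cfc φ B - cfc φ (l • A + (1 - l) • B)) *ᵥ x) =
        ((∑ k, w k * φ (p k) : ℝ) : ℂ) := by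
  have hC : (l • A + (1 - l) • B).IsHermitian :=
    (hA.smul (IsSelfAdjoint.all l)).add (hB.smul (IsSelfAdjoint.all (1 - l)))
  have hCI := spectrum_convexComb_subset hA hB hI hAI hBI h0 h1
  obtain ⟨a, ha⟩ := exists_weights_quadForm_cfc hA x
  obtain ⟨b, hb⟩ := exists_weights_quadForm_cfc hB x
  obtain ⟨c, hc⟩ := exists_weights_quadForm_cfc hC x
  refine ⟨Sum.elim (l • a) (Sum.elim ((1 - l) • b) (-c)),
    Sum.elim hA.eigenvalues (Sum.elim hB.eigenvalues hC.eigenvalues), ?_, fun φ => ?_⟩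
  · rintro (k | k | k)
    · exact hAI (hA.eigenvalues_mem_spectrum_real k)
    · exact hBI (hB.eigenvalues_mem_spectrum_real k)
    · exact hCI (hC.eigenvalues_mem_spectrum_real k)
  · rw [sub_mulVec, add_mulVec, smul_mulVec, smul_mulVec, dotProduct_sub, dotProduct_add,
      dotProduct_smul, dotProduct_smul, ha, hb, hc]
    simp only [Fintype.sum_sum_type, Sum.elim_inl, Sum.elim_inr, Pi.smul_apply, Pi.neg_apply,
      smul_eq_mul, mul_assoc, ← Finset.mul_sum, neg_mul, Finset.sum_neg_distrib,
      Complex.real_smul]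
    push_cast
    ring

/-- Although `∫ (f s - f 0) / s ds` may diverge at `0`, its increment between `u * b` and `u * a`
vanishes as `u → 0`, by continuity of `f` at `0`. -/
lemma tendsto_antideriv_increment {α : EReal} {f G : ℝ → ℝ}
    (hfc : ContinuousOn f {x : ℝ | 0 ≤ x ∧ (x : EReal) < α})
    (hG : ∀ t : ℝ, 0 < t → (t : EReal) < α → HasDerivAt G (f t / t) t)
    {a b : ℝ} (ha : 0 < a) (haα : (a : EReal) < α) (hb : 0 < b) (hbα : (b : EReal) < α) :
    Filter.Tendsto (fun u : ℝ => (G (u * a) - f 0 * Real.log (u * a)) -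
      (G (u * b) - f 0 * Real.log (u * b))) (nhdsWithin 0 (Ioi 0)) (nhds 0) := by
  rw [Metric.tendsto_nhds]
  intro ε hε
  set m := min a b
  set M := max a b
  have hm : 0 < m := lt_min ha hb
  have hM : 0 < M := lt_max_of_lt_left ha
  have hMα : (M : EReal) < α := by
    rcases max_choice a b with h | h <;> simp only [M, h] <;> assumption
  have hα : (0 : ℝ) ∈ {x : ℝ | 0 ≤ x ∧ (x : EReal) < α} :=
    ⟨le_rfl, lt_trans (by exact_mod_cast ha) haα⟩
  set η := ε * m / (2 * (|a - b| + 1)) with hη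
  have hηpos : 0 < η := by positivity
  obtain ⟨δ, hδ, hfδ⟩ := Metric.continuousWithinAt_iff.1 (hfc 0 hα) η hηpos
  have hev : Ioo (0 : ℝ) (min 1 (δ / M)) ∈ nhdsWithin (0 : ℝ) (Ioi 0) :=
    Ioo_mem_nhdsGT (lt_min one_pos (by positivity))
  filter_upwards [hev] with u hu
  obtain ⟨hu0, hu1⟩ := hu
  have hu1' : u < 1 := hu1.trans_le (min_le_left _ _)
  have huδ : u * M < δ := (lt_div_iff₀ hM).1 (hu1.trans_le (min_le_right _ _))
  have key := Convex.norm_image_sub_le_of_norm_hasDerivWithin_le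
    (f := fun s => G s - f 0 * Real.log s) (f' := fun s => f s / s - f 0 * s⁻¹)
    (C := η / (u * m)) (s := Icc (u * m) (u * M)) (x := u * b) (y := u * a)
    (fun s hs => by
      have hs0 : 0 < s := (mul_pos hu0 hm).trans_le hs.1
      have hsα : (s : EReal) < α := by
        refine lt_of_le_of_lt ?_ hMα
        have : s ≤ M := hs.2.trans (by nlinarith)
        exact_mod_cast this
      exact ((hG s hs0 hsα).sub ((Real.hasDerivAt_log hs0.ne').const_mul _)).hasDerivWithinAt)
    (fun s hs => by
      have hs0 : 0 < s := (mul_pos hu0 hm).trans_le hs.1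
      have hsα : (s : EReal) < α := by
        refine lt_of_le_of_lt ?_ hMα
        have : s ≤ M := hs.2.trans (by nlinarith)
        exact_mod_cast this
      have h1 : dist (f s) (f 0) < η := hfδ ⟨hs0.le, hsα⟩ (by
        rw [Real.dist_eq, sub_zero, abs_of_pos hs0]; exact hs.2.trans_lt huδ)
      rw [Real.dist_eq] at h1
      have : f s / s - f 0 * s⁻¹ = (f s - f 0) / s := by ring
      rw [this, Real.norm_eq_abs, abs_div, abs_of_pos hs0]
      exact div_le_div₀ hηpos.le h1.le (by positivity) hs.1)
    (convex_Icc _ _)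
    ⟨by gcongr; exact min_le_right _ _, by gcongr; exact le_max_right _ _⟩
    ⟨by gcongr; exact min_le_left _ _, by gcongr; exact le_max_left _ _⟩
  rw [dist_zero_right]
  refine key.trans_lt ?_
  rw [← mul_sub, norm_mul, Real.norm_eq_abs, Real.norm_eq_abs, abs_of_pos hu0]
  have e : η / (u * m) * (u * |a - b|) = ε * (|a - b| / (2 * (|a - b| + 1))) := by
    rw [hη]; field_simp
  rw [e]
  have : |a - b| / (2 * (|a - b| + 1)) < 1 := by
    rw [div_lt_one (by positivity)]
    linarith [abs_nonneg (a - b)]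
  nlinarith

/-- The scalar core: `u ↦ ∑ w k * G (u * p k)` has derivative `(∑ w k * f (u * p k)) / u ≥ 0` on
`(0, 1]` and tends to `f 0 * ∑ w k * log (p k) ≥ 0` as `u → 0`. -/
lemma sum_antideriv_nonneg {α : EReal} {f G : ℝ → ℝ}
    (hfc : ContinuousOn f {x : ℝ | 0 ≤ x ∧ (x : EReal) < α}) (hf0 : f 0 ≤ 0)
    (hG : ∀ t : ℝ, 0 < t → (t : EReal) < α → HasDerivAt G (f t / t) t)
    {ι : Type*} [Fintype ι] (w p : ι → ℝ) (hp : ∀ k, 0 < p k ∧ (p k : EReal) < α)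
    (hw : ∑ k, w k = 0) (hlog : ∑ k, w k * Real.log (p k) ≤ 0)
    (hf : ∀ u : ℝ, 0 < u → u ≤ 1 → 0 ≤ ∑ k, w k * f (u * p k)) :
    0 ≤ ∑ k, w k * G (p k) := by
  rcases isEmpty_or_nonempty ι with hι | ⟨⟨k₀⟩⟩
  · simp
  have hin : ∀ u : ℝ, 0 < u → u ≤ 1 → ∀ k, 0 < u * p k ∧ ((u * p k : ℝ) : EReal) < α := by
    intro u hu hu1 k
    refine ⟨mul_pos hu (hp k).1, lt_of_le_of_lt ?_ (hp k).2⟩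
    exact_mod_cast mul_le_of_le_one_left (hp k).1.le hu1
  have hder : ∀ u ∈ Ioc (0 : ℝ) 1, HasDerivAt (fun u => ∑ k, w k * G (u * p k))
      ((∑ k, w k * f (u * p k)) / u) u := by
    intro u hu
    have hsum : HasDerivAt (fun u => ∑ k, w k * G (u * p k))
        (∑ k, w k * (f (u * p k) / (u * p k) * (1 * p k))) u := by
      refine HasDerivAt.fun_sum fun k _ => HasDerivAt.const_mul _ ?_
      exact (hG _ (hin u hu.1 hu.2 k).1 (hin u hu.1 hu.2 k).2).comp u
        ((hasDerivAt_id u).mul_const (p k))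
    convert hsum using 1
    rw [Finset.sum_div]
    refine Finset.sum_congr rfl fun k _ => ?_
    have := (hp k).1.ne'
    have := hu.1.ne'
    field_simp
  have hmono : MonotoneOn (fun u => ∑ k, w k * G (u * p k)) (Ioc (0 : ℝ) 1) :=
    monotoneOn_of_hasDerivWithinAt_nonneg (convex_Ioc 0 1)
      (fun u hu => (hder u hu).continuousAt.continuousWithinAt)
      (fun u hu => (hder u (interior_subset hu)).hasDerivWithinAt)
      (fun u hu => div_nonneg (hf u (interior_subset hu).1 (interior_subset hu).2)
        (interior_subset hu).1.le)
  have hlim : Filter.Tendsto (fun u => ∑ k, w k * G (u * p k)) (nhdsWithin 0 (Ioi 0))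
      (nhds (f 0 * ∑ k, w k * Real.log (p k))) := by
    have h1 : Filter.Tendsto (fun u : ℝ => ∑ k, w k * ((G (u * p k) - f 0 * Real.log (u * p k)) -
        (G (u * p k₀) - f 0 * Real.log (u * p k₀))) + f 0 * ∑ k, w k * Real.log (p k))
        (nhdsWithin 0 (Ioi 0)) (nhds (∑ k, w k * 0 + f 0 * ∑ k, w k * Real.log (p k))) :=
      (tendsto_finsetSum _ fun k _ => (tendsto_antideriv_increment hfc hG (hp k).1 (hp k).2
        (hp k₀).1 (hp k₀).2).const_mul (w k)).add_const _
    simp only [mul_zero, Finset.sum_const_zero, zero_add] at h1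
    refine h1.congr' ?_
    filter_upwards [self_mem_nhdsWithin] with u hu
    have hu : 0 < u := hu
    -- Every term independent of `k` is annihilated by `∑ w k = 0`.
    have e : ∀ k, w k * ((G (u * p k) - f 0 * Real.log (u * p k)) -
        (G (u * p k₀) - f 0 * Real.log (u * p k₀))) =
        w k * G (u * p k) - f 0 * (w k * Real.log (p k)) -
        w k * (f 0 * Real.log u + (G (u * p k₀) - f 0 * Real.log (u * p k₀))) := by
      intro k
      rw [Real.log_mul hu.ne' (hp k).1.ne']
      ring
    simp only [e, Finset.sum_sub_distrib, ← Finset.sum_mul, ← Finset.mul_sum, hw]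
    ring
  have hle : f 0 * ∑ k, w k * Real.log (p k) ≤ ∑ k, w k * G (1 * p k) := by
    refine le_of_tendsto hlim ?_
    filter_upwards [Ioc_mem_nhdsGT (zero_lt_one (α := ℝ))] with u hu
    exact hmono hu ⟨one_pos, le_rfl⟩ hu.2
  simp only [one_mul] at hle
  exact (mul_nonneg_of_nonpos_of_nonpos hf0 hlog).trans hle

/-- Proposition 3.7: if `f : [0,α) → ℝ` is continuous with `f(0) ≤ 0` and matrix convex of
order 2 on `[0,α)`, then any antiderivative `G` of `g(t) = f(t)/t` on `(0,α)` is matrix convex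
of order 2 on `(0,α)`. -/
theorem stmt_14 (α : EReal) (hα : 0 < α) (f : ℝ → ℝ)
    (hfc : ContinuousOn f {x : ℝ | 0 ≤ x ∧ (x : EReal) < α})
    (hf0 : f 0 ≤ 0)
    (hconv : MatrixConvexOn 2 f {x : ℝ | 0 ≤ x ∧ (x : EReal) < α})
    (G : ℝ → ℝ)
    (hG : ∀ t : ℝ, 0 < t → (t : EReal) < α → HasDerivAt G (f t / t) t) :
    MatrixConvexOn 2 G {x : ℝ | 0 < x ∧ (x : EReal) < α} := by
  intro A B hA hB hAI hBI l h0 h1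
  have hI : {x : ℝ | 0 < x ∧ (x : EReal) < α}.OrdConnected :=
    ⟨fun a ha b hb c hc =>
      ⟨ha.1.trans_le hc.1, lt_of_le_of_lt (by exact_mod_cast hc.2) hb.2⟩⟩
  have herm {X : Matrix (Fin 2) (Fin 2) ℂ} : (cfc G X).IsHermitian := cfc_predicate G X
  refine posSemidef_iff_dotProduct_mulVec.2
    ⟨((herm.smul (IsSelfAdjoint.all l)).add (herm.smul (IsSelfAdjoint.all (1 - l)))).sub herm,
      fun x => ?_⟩
  obtain ⟨w, p, hp, hgap⟩ := exists_weights_gap hA hB hI hAI hBI h0 h1 x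
  rw [hgap G]
  have hC : (l • A + (1 - l) • B).IsHermitian :=
    (hA.smul (IsSelfAdjoint.all l)).add (hB.smul (IsSelfAdjoint.all (1 - l)))
  refine Complex.zero_le_real.2 (sum_antideriv_nonneg hfc hf0 hG w p hp ?_ ?_ ?_)
  -- The gap of the constant function `1` is zero.
  · have h := hgap fun _ => 1
    rw [cfc_const_one ℝ A hA.isSelfAdjoint, cfc_const_one ℝ B hB.isSelfAdjoint,
      cfc_const_one ℝ _ hC.isSelfAdjoint, ← add_smul] at h
    simp only [add_sub_cancel, one_smul, sub_self, zero_mulVec, dotProduct_zero, mul_one] at h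
    exact_mod_cast h.symm
  · have h := (posSemidef_log_gap hA hB (fun y hy => (hAI hy).1) (fun y hy => (hBI hy).1)
      h0 h1).dotProduct_mulVec_nonneg x
    rw [← neg_sub, neg_mulVec, dotProduct_neg, hgap Real.log, ← Complex.ofReal_neg,
      Complex.zero_le_real] at h
    linarith
  · intro u hu hu1
    -- Dilation: `f(u • X)` is the functional calculus of `t ↦ f (u * t)` at `X`.
    have hcomp {X : Matrix (Fin 2) (Fin 2) ℂ} (hX : X.IsHermitian) :
        cfc f (u • X) = cfc (fun t => f (u * t)) X := by
      refine (cfc_comp_const_mul u f X ?_ hX.isSelfAdjoint).symm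
      refine Set.Finite.continuousOn ?_ f
      rw [hX.spectrum_real_eq_range_eigenvalues]
      exact (finite_range _).image _
    have hspec {X : Matrix (Fin 2) (Fin 2) ℂ}
        (hX : spectrum ℝ X ⊆ {x : ℝ | 0 < x ∧ (x : EReal) < α}) :
        spectrum ℝ (u • X) ⊆ {x : ℝ | 0 ≤ x ∧ (x : EReal) < α} := by
      have : u • X = (Units.mk0 u hu.ne') • X := rfl
      rw [this, spectrum.unit_smul_eq_smul]
      rintro _ ⟨y, hy, rfl⟩
      obtain ⟨hy0, hyα⟩ := hX hy
      refine ⟨(mul_pos hu hy0).le, lt_of_le_of_lt ?_ hyα⟩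
      exact_mod_cast mul_le_of_le_one_left hy0.le hu1
    have h := (hconv (u • A) (u • B) (hA.smul (IsSelfAdjoint.all u))
      (hB.smul (IsSelfAdjoint.all u)) (hspec hAI) (hspec hBI) l h0 h1).dotProduct_mulVec_nonneg x
    rw [smul_comm l u A, smul_comm (1 - l) u B, ← smul_add, hcomp hA, hcomp hB, hcomp hC,
      hgap, Complex.zero_le_real] at h
    exact h
end

section
/- Let 0 < α ≤ ∞ and let f : [0,α) → ℝ be four times continuously differentiable on (0,α), continuous at 0 with f(0) ≤ 0, and suppose that for every t ∈ (0,α) the 2×2 real matrix [[f''(t)/2, f'''(t)/6],[f'''(t)/6, f⁗(t)/24]] is positive semidefinite. Define g(t) = f(t)/t on (0,α). Then for every t ∈ (0,α) the 2×2 real matrix [[g'(t)/2, g''(t)/6],[g''(t)/6, g'''(t)/24]] is positive semidefinite. -/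
/-!
Fix a vector `(a, b)`. Since `f = t g`, the identities `t^(k-1) f^(k) = (t^k g^(k-1))'` for
`k = 2, 3, 4` say that
`Q(t) = a² t² g'(t) / 2 + 2 a b t³ g''(t) / 6 + b² t⁴ g'''(t) / 24`
has derivative `t` times the Kraus form of `f` at the vector `(a, t b)`. Hence `Q` is increasing,
and `Q(t)` is at least the limit of `Q` at `0⁺`, which is
`-f(0) (a² / 2 - 2 a b / 3 + b² / 4) ≥ 0`.
Replacing `(a, b)` by `(x / t, y / t²)` turns `Q(t) ≥ 0` into the claim.

The value of the limit rests on `t f' → 0`, `t² f'' → 0` and `t³ f''' → 0` as `t → 0⁺`. These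
follow from the convexity of `f` and of `f''` (the diagonal entries of the Kraus matrix are
nonnegative): `tendsto_deriv_of_convex` bounds a derivative by difference quotients, which gives
the first and third limits, and `tendsto_of_convex_of_deriv` bounds a convex function by its
average, which gives the second.
-/

open Matrix Set MeasureTheory
open scoped ComplexOrder

open Filter Topology

namespace KrausQuotient

lemma posSemidef_two_iff (p q r : ℝ) :
    (!![p, q; q, r]).PosSemidef ↔ ∀ x y : ℝ, 0 ≤ p * x ^ 2 + 2 * q * x * y + r * y ^ 2 := by
  rw [Matrix.posSemidef_iff_dotProduct_mulVec]
  constructor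
  · rintro ⟨-, h⟩ x y
    have := h ![x, y]
    simp [Matrix.mulVec, dotProduct, Fin.sum_univ_two] at this
    linarith
  · intro h
    refine ⟨?_, fun v => ?_⟩
    · ext i j
      fin_cases i <;> fin_cases j <;> simp
    · have := h (v 0) (v 1)
      simp [Matrix.mulVec, dotProduct, Fin.sum_univ_two]
      linarith

lemma monotoneOn_of_hasDerivAt {T : ℝ} {F F' : ℝ → ℝ}
    (hF : ∀ x ∈ Ioo 0 T, HasDerivAt F (F' x) x) (hn : ∀ x ∈ Ioo 0 T, 0 ≤ F' x) :
    MonotoneOn F (Ioo 0 T) := by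
  apply monotoneOn_of_deriv_nonneg (convex_Ioo 0 T)
  · exact fun x hx => (hF x hx).continuousAt.continuousWithinAt
  · rw [interior_Ioo]
    exact fun x hx => (hF x hx).differentiableAt.differentiableWithinAt
  · rw [interior_Ioo]
    intro x hx
    rw [(hF x hx).deriv]
    exact hn x hx

/-- A function with nonnegative second derivative lies above its tangent lines. -/
lemma tangent_le {T : ℝ} {h h₁ h₂ : ℝ → ℝ}
    (hd : ∀ x ∈ Ioo 0 T, HasDerivAt h (h₁ x) x) (hd₁ : ∀ x ∈ Ioo 0 T, HasDerivAt h₁ (h₂ x) x)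
    (hn : ∀ x ∈ Ioo 0 T, 0 ≤ h₂ x) {s t : ℝ} (hs : s ∈ Ioo 0 T) (ht : t ∈ Ioo 0 T) :
    h t + h₁ t * (s - t) ≤ h s := by
  have hm := monotoneOn_of_hasDerivAt hd₁ hn
  have mvt : ∀ u ∈ Ioo 0 T, ∀ v ∈ Ioo 0 T, u < v → ∃ c ∈ Ioo u v, h v - h u = h₁ c * (v - u) := by
    intro u hu v hv huv
    obtain ⟨c, hc, e⟩ := exists_hasDerivAt_eq_slope h h₁ huv
      (fun x hx => (hd x ⟨hu.1.trans_le hx.1, hx.2.trans_lt hv.2⟩).continuousAt.continuousWithinAt)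
      (fun x hx => hd x ⟨hu.1.trans hx.1, hx.2.trans hv.2⟩)
    refine ⟨c, hc, ?_⟩
    rw [e, div_mul_cancel₀]
    linarith
  rcases lt_trichotomy s t with hst | rfl | hst
  · obtain ⟨c, hc, e⟩ := mvt s hs t ht hst
    have := hm ⟨hs.1.trans hc.1, hc.2.trans ht.2⟩ ht hc.2.le
    nlinarith
  · simp
  · obtain ⟨c, hc, e⟩ := mvt t ht s hs hst
    have := hm ht ⟨ht.1.trans hc.1, hc.2.trans hs.2⟩ hc.1.le
    nlinarith

lemma tendsto_const_mul_zero {c : ℝ} (hc : 0 < c) :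
    Tendsto (fun s : ℝ => c * s) (𝓝[>] 0) (𝓝[>] 0) := by
  apply tendsto_nhdsWithin_of_tendsto_nhds_of_eventually_within
  · have : Tendsto (fun s : ℝ => c * s) (𝓝 0) (𝓝 (c * 0)) := by
      exact (continuous_const_mul c).tendsto 0
    rw [mul_zero] at this
    exact this.mono_left nhdsWithin_le_nhds
  · filter_upwards [self_mem_nhdsWithin] with s hs
    exact mul_pos hc hs

/-- A limit `s ^ k * φ s → 0` at `0⁺` is insensitive to rescaling the argument of `φ`. -/
lemma tendsto_rescale {φ : ℝ → ℝ} {k : ℕ}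
    (h : Tendsto (fun s => s ^ k * φ s) (𝓝[>] 0) (𝓝 0)) {c : ℝ} (hc : 0 < c) :
    Tendsto (fun s => s ^ k * φ (c * s)) (𝓝[>] 0) (𝓝 0) := by
  have := (h.comp (tendsto_const_mul_zero hc)).const_mul ((c ^ k)⁻¹)
  rw [mul_zero] at this
  refine this.congr fun s => ?_
  have : c ^ k ≠ 0 := by positivity
  simp only [Function.comp, mul_pow]
  field_simp

lemma eventually_mem {T : ℝ} (hT : 0 < T) : ∀ᶠ s : ℝ in 𝓝[>] 0, s ∈ Ioo 0 T :=
  Ioo_mem_nhdsGT hT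

/-- For convex `h`, the number `s * h' s` lies between `2 (h s - h (s / 2))` and
`h (2 s) - h s`; this transfers decay of `h`-differences to decay of `h'`. -/
lemma tendsto_deriv_of_convex {T : ℝ} (hT : 0 < T) {h h₁ h₂ : ℝ → ℝ}
    (hd : ∀ x ∈ Ioo 0 T, HasDerivAt h (h₁ x) x) (hd₁ : ∀ x ∈ Ioo 0 T, HasDerivAt h₁ (h₂ x) x)
    (hn : ∀ x ∈ Ioo 0 T, 0 ≤ h₂ x) {k : ℕ}
    (hl : ∀ c : ℝ, 0 < c → Tendsto (fun s => s ^ k * (h (c * s) - h s)) (𝓝[>] 0) (𝓝 0)) :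
    Tendsto (fun s => s ^ (k + 1) * h₁ s) (𝓝[>] 0) (𝓝 0) := by
  have lo := (hl (1 / 2) (by norm_num)).const_mul (-2)
  have hi := hl 2 (by norm_num)
  rw [mul_zero] at lo
  refine tendsto_of_tendsto_of_tendsto_of_le_of_le' lo hi ?_ ?_
  · filter_upwards [eventually_mem hT] with s hs
    have h0 : 0 < s := hs.1
    have := tangent_le hd hd₁ hn (s := 1 / 2 * s) (t := s) ⟨by linarith, by linarith [hs.2]⟩ hs
    have := mul_le_mul_of_nonneg_left this (pow_nonneg h0.le k)
    rw [pow_succ]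
    linarith
  · filter_upwards [eventually_mem (half_pos hT)] with s hs
    have h0 : 0 < s := hs.1
    have := tangent_le hd hd₁ hn (s := 2 * s) (t := s) ⟨by linarith, by linarith [hs.2]⟩
      ⟨h0, by linarith [hs.2]⟩
    have := mul_le_mul_of_nonneg_left this (pow_nonneg h0.le k)
    rw [pow_succ]
    linarith

/-- A nonnegative convex `h = p'` satisfies `s * h s ≤ p (3 s / 2) - p (s / 2)`, being at most its
average over the interval `[s / 2, 3 s / 2]` centred at `s`. -/
lemma tendsto_of_convex_of_deriv {T : ℝ} (hT : 0 < T) {p h h₁ h₂ : ℝ → ℝ}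
    (hp : ∀ x ∈ Ioo 0 T, HasDerivAt p (h x) x)
    (hd : ∀ x ∈ Ioo 0 T, HasDerivAt h (h₁ x) x) (hd₁ : ∀ x ∈ Ioo 0 T, HasDerivAt h₁ (h₂ x) x)
    (hn : ∀ x ∈ Ioo 0 T, 0 ≤ h x) (hn₂ : ∀ x ∈ Ioo 0 T, 0 ≤ h₂ x)
    (hl : Tendsto (fun s => s ^ 1 * p s) (𝓝[>] 0) (𝓝 0)) :
    Tendsto (fun s => s ^ 2 * h s) (𝓝[>] 0) (𝓝 0) := by
  have hi := (tendsto_rescale hl (c := 3 / 2) (by norm_num)).sub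
    (tendsto_rescale hl (c := 1 / 2) (by norm_num))
  rw [sub_zero] at hi
  refine tendsto_of_tendsto_of_tendsto_of_le_of_le' tendsto_const_nhds hi ?_ ?_
  · filter_upwards [eventually_mem hT] with s hs
    exact mul_nonneg (sq_nonneg s) (hn s hs)
  · filter_upwards [eventually_mem (half_pos hT)] with s hs
    have h0 : 0 < s := hs.1
    have hsT : s ∈ Ioo 0 T := ⟨h0, by linarith [hs.2]⟩
    -- Subtracting an antiderivative of the tangent line of `h` at `s` leaves an increasing
    -- function; the quadratic terms agree at the two endpoints and cancel.
    have hm : MonotoneOn (fun x => p x - (h s * (x - s) + h₁ s * (x - s) ^ 2 / 2)) (Ioo 0 T) := by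
      apply monotoneOn_of_hasDerivAt (F' := fun x => h x - (h s + h₁ s * (x - s)))
      · intro x hx
        have e := (hasDerivAt_id x).sub_const s
        have := (hp x hx).sub
          ((e.const_mul (h s)).add (((e.pow 2).const_mul (h₁ s)).div_const 2))
        refine (this.congr_deriv ?_).congr_of_eventuallyEq ?_
        · simp; ring
        · filter_upwards with y
          simp
      · intro x hx
        have := tangent_le hd hd₁ hn₂ hx hsT
        linarith
    have := hm (a := 1 / 2 * s) (b := 3 / 2 * s) ⟨by linarith, by linarith [hs.2]⟩
      ⟨by linarith, by linarith [hs.2]⟩ (by linarith)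
    have := mul_le_mul_of_nonneg_left this h0.le
    linarith

lemma hasDerivAt_iteratedDeriv {f : ℝ → ℝ} {x : ℝ} {n m : ℕ} (hf : ContDiffAt ℝ n f x)
    (hm : m < n) : HasDerivAt (iteratedDeriv m f) (iteratedDeriv (m + 1) f x) x := by
  have h := hf.contDiffWithinAt (s := univ)
  have := h.differentiableWithinAt_iteratedDerivWithin (m := m) (by exact_mod_cast hm)
    (by simp)
  rw [iteratedDerivWithin_univ, differentiableWithinAt_univ] at this
  rw [iteratedDeriv_succ]
  exact this.hasDerivAt

/-- Nonnegativity of the form `Q` at `t`, with `t² g'`, `t³ g''`, `t⁴ g'''` written out through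
`f` and its derivatives `f₁, …, f₄`. -/
lemma form_nonneg {T : ℝ} {f f₁ f₂ f₃ f₄ : ℝ → ℝ}
    (d0 : ∀ x ∈ Ioo 0 T, HasDerivAt f (f₁ x) x) (d1 : ∀ x ∈ Ioo 0 T, HasDerivAt f₁ (f₂ x) x)
    (d2 : ∀ x ∈ Ioo 0 T, HasDerivAt f₂ (f₃ x) x) (d3 : ∀ x ∈ Ioo 0 T, HasDerivAt f₃ (f₄ x) x)
    (hc : Tendsto f (𝓝[>] 0) (𝓝 (f 0))) (hf0 : f 0 ≤ 0)
    (hK : ∀ t ∈ Ioo 0 T, ∀ x y : ℝ,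
      0 ≤ f₂ t / 2 * x ^ 2 + 2 * (f₃ t / 6) * x * y + f₄ t / 24 * y ^ 2)
    {t : ℝ} (ht : t ∈ Ioo 0 T) (a b : ℝ) :
    0 ≤ a ^ 2 / 2 * (t * f₁ t - f t)
      + a * b / 3 * (t ^ 2 * f₂ t - 2 * (t * f₁ t) + 2 * f t)
      + b ^ 2 / 24 * (t ^ 3 * f₃ t - 3 * (t ^ 2 * f₂ t) + 6 * (t * f₁ t) - 6 * f t) := by
  have hT : 0 < T := ht.1.trans ht.2
  have n2 : ∀ x ∈ Ioo 0 T, 0 ≤ f₂ x := fun x hx => by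
    have := hK x hx 1 0
    linarith
  have n4 : ∀ x ∈ Ioo 0 T, 0 ≤ f₄ x := fun x hx => by
    have := hK x hx 0 1
    linarith
  have l1 : Tendsto (fun s => s ^ 1 * f₁ s) (𝓝[>] 0) (𝓝 0) := by
    refine tendsto_deriv_of_convex (k := 0) hT d0 d1 n2 fun c hc0 => ?_
    simpa using (hc.comp (tendsto_const_mul_zero hc0)).sub hc
  have l2 : Tendsto (fun s => s ^ 2 * f₂ s) (𝓝[>] 0) (𝓝 0) :=
    tendsto_of_convex_of_deriv hT d1 d2 d3 n2 n4 l1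
  have l3 : Tendsto (fun s => s ^ 3 * f₃ s) (𝓝[>] 0) (𝓝 0) := by
    refine tendsto_deriv_of_convex (k := 2) hT d2 d3 n4 fun c hc0 => ?_
    simpa [mul_sub] using (tendsto_rescale l2 hc0).sub l2
  simp only [pow_one] at l1
  set Q : ℝ → ℝ := fun t => a ^ 2 / 2 * (t * f₁ t - f t)
      + a * b / 3 * (t ^ 2 * f₂ t - 2 * (t * f₁ t) + 2 * f t)
      + b ^ 2 / 24 * (t ^ 3 * f₃ t - 3 * (t ^ 2 * f₂ t) + 6 * (t * f₁ t) - 6 * f t) with hQ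
  have hm : MonotoneOn Q (Ioo 0 T) := by
    apply monotoneOn_of_hasDerivAt
      (F' := fun t => t * (f₂ t / 2 * a ^ 2 + 2 * (f₃ t / 6) * a * (t * b)
        + f₄ t / 24 * (t * b) ^ 2))
    · intro x hx
      have e1 := (hasDerivAt_id' x).mul (d1 x hx)
      have e2 := (hasDerivAt_pow 2 x).mul (d2 x hx)
      have e3 := (hasDerivAt_pow 3 x).mul (d3 x hx)
      have := (((e1.sub (d0 x hx)).const_mul (a ^ 2 / 2)).add
        (((e2.sub (e1.const_mul 2)).add ((d0 x hx).const_mul 2)).const_mul (a * b / 3))).add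
        ((((e3.sub (e2.const_mul 3)).add (e1.const_mul 6)).sub
          ((d0 x hx).const_mul 6)).const_mul (b ^ 2 / 24))
      refine this.congr_deriv ?_
      norm_num
      ring
    · exact fun x hx => mul_nonneg hx.1.le (hK x hx a (x * b))
  have hlim := (((l1.sub hc).const_mul (a ^ 2 / 2)).add
    (((l2.sub (l1.const_mul 2)).add (hc.const_mul 2)).const_mul (a * b / 3))).add
    ((((l3.sub (l2.const_mul 3)).add (l1.const_mul 6)).sub
      (hc.const_mul 6)).const_mul (b ^ 2 / 24))
  have hle := le_of_tendsto (b := Q t) hlim (by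
    filter_upwards [eventually_mem ht.1] with s hs
    exact hm ⟨hs.1, hs.2.trans ht.2⟩ ht hs.2.le)
  refine le_trans ?_ hle
  nlinarith [mul_nonneg (neg_nonneg.2 hf0) (sq_nonneg (a - 2 / 3 * b)),
    mul_nonneg (neg_nonneg.2 hf0) (sq_nonneg b)]

end KrausQuotient

open KrausQuotient in
/-- The analytic core of the proof of Proposition 3.7: if `f` is `C⁴` on `(0,α)`, continuous at
`0` from the right with `f(0) ≤ 0`, and the Kraus matrix of `f` is positive semidefinite on
`(0,α)`, then the Kraus matrix of `g(t) = f(t)/t` is positive semidefinite on `(0,α)`. -/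
theorem stmt_15 (α : EReal) (hα : 0 < α) (f : ℝ → ℝ)
    (hf : ContDiffOn ℝ 4 f {x : ℝ | 0 < x ∧ (x : EReal) < α})
    (hf0c : ContinuousWithinAt f (Ici (0:ℝ)) 0) (hf0 : f 0 ≤ 0)
    (hK : ∀ t : ℝ, 0 < t → (t : EReal) < α →
      (!![iteratedDeriv 2 f t / 2, iteratedDeriv 3 f t / 6;
          iteratedDeriv 3 f t / 6, iteratedDeriv 4 f t / 24]).PosSemidef) :
    ∀ t : ℝ, 0 < t → (t : EReal) < α →
      (!![deriv (fun x => f x / x) t / 2, iteratedDeriv 2 (fun x => f x / x) t / 6;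
          iteratedDeriv 2 (fun x => f x / x) t / 6,
          iteratedDeriv 3 (fun x => f x / x) t / 24]).PosSemidef := by
  intro t ht0 htα
  obtain ⟨T, htT, hTα⟩ := EReal.lt_iff_exists_real_btwn.1 htα
  have htT : t < T := by exact_mod_cast htT
  have hsub : ∀ x ∈ Ioo 0 T, (x : EReal) < α := fun x hx =>
    lt_trans (by exact_mod_cast hx.2) hTα
  have hcd : ∀ x ∈ Ioo 0 T, ContDiffAt ℝ (4 : ℕ) f x := fun x hx =>
    hf.contDiffAt (mem_of_superset (isOpen_Ioo.mem_nhds hx) fun y hy => ⟨hy.1, hsub y hy⟩)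
  have d : ∀ m < 4, ∀ x ∈ Ioo 0 T,
      HasDerivAt (iteratedDeriv m f) (iteratedDeriv (m + 1) f x) x :=
    fun m hm x hx => hasDerivAt_iteratedDeriv (hcd x hx) hm
  have d0 := d 0 (by norm_num)
  have d1 := d 1 (by norm_num)
  have d2 := d 2 (by norm_num)
  have d3 := d 3 (by norm_num)
  simp only [iteratedDeriv_zero, Nat.reduceAdd] at d0 d1 d2 d3
  set f₁ := iteratedDeriv 1 f
  set f₂ := iteratedDeriv 2 f
  set f₃ := iteratedDeriv 3 f
  set f₄ := iteratedDeriv 4 f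
  have htm : t ∈ Ioo 0 T := ⟨ht0, htT⟩
  have key := fun a b => form_nonneg d0 d1 d2 d3
    (hf0c.mono_left (nhdsWithin_mono _ Ioi_subset_Ici_self)) hf0
    (fun x hx => (posSemidef_two_iff _ _ _).1 (hK x hx.1 (hsub x hx))) htm a b
  have g1 : ∀ x ∈ Ioo 0 T, deriv (fun x => f x / x) x = (x * f₁ x - f x) / x ^ 2 := by
    intro x hx
    refine ((d0 x hx).div (hasDerivAt_id' x) hx.1.ne').deriv.trans ?_
    ring
  have g2 : ∀ x ∈ Ioo 0 T, iteratedDeriv 2 (fun x => f x / x) x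
      = (x ^ 2 * f₂ x - 2 * (x * f₁ x) + 2 * f x) / x ^ 3 := by
    intro x hx
    have hx0 : x ≠ 0 := hx.1.ne'
    rw [iteratedDeriv_succ, iteratedDeriv_one,
      EventuallyEq.deriv_eq (eventually_of_mem (isOpen_Ioo.mem_nhds hx) g1)]
    refine ((((hasDerivAt_id' x).mul (d1 x hx)).sub (d0 x hx)).div (hasDerivAt_pow 2 x)
      (pow_ne_zero 2 hx0)).deriv.trans ?_
    simp
    field_simp
    ring
  have g3 : ∀ x ∈ Ioo 0 T, iteratedDeriv 3 (fun x => f x / x) x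
      = (x ^ 3 * f₃ x - 3 * (x ^ 2 * f₂ x) + 6 * (x * f₁ x) - 6 * f x) / x ^ 4 := by
    intro x hx
    have hx0 : x ≠ 0 := hx.1.ne'
    rw [iteratedDeriv_succ,
      EventuallyEq.deriv_eq (eventually_of_mem (isOpen_Ioo.mem_nhds hx) g2)]
    refine (((((hasDerivAt_pow 2 x).mul (d2 x hx)).sub
      (((hasDerivAt_id' x).mul (d1 x hx)).const_mul 2)).add ((d0 x hx).const_mul 2)).div
      (hasDerivAt_pow 3 x) (pow_ne_zero 3 hx0)).deriv.trans ?_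
    simp
    field_simp
    ring
  rw [posSemidef_two_iff, g1 t htm, g2 t htm, g3 t htm]
  intro x y
  refine (key (x / t) (y / t ^ 2)).trans_eq ?_
  field_simp
  ring
end
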